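/- Let G be a maximal 1-plane graph and let F₁ and F₂ be two faces of the drawing of G that share a non-crossing edge e. If v₁ and v₂ are vertices of G with v₁ ∈ ∂(F₁)∖∂(F₂) and v₂ ∈ ∂(F₂)∖∂(F₁), then v₁ and v₂ are adjacent in G. -/

import Mathlib

open Set

/-- A drawing of a simple graph in the plane: each vertex is assigned a distinct point,
and each edge a continuous arc (an injective continuous curve) joining its endpoints. -/
structure Drawing {V : Type} (G : SimpleGraph V) where
  pos : V → ℝ × ℝ
  pos_inj : Function.Injective pos
  arc : ∀ ⦃u v : V⦄, G.Adj u v → Set (ℝ × ℝ)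
  arc_symm : ∀ ⦃u v : V⦄ (h : G.Adj u v), arc h.symm = arc h
  arc_isArc : ∀ ⦃u v : V⦄ (h : G.Adj u v), ∃ γ : ℝ → ℝ × ℝ,
    ContinuousOn γ (Set.Icc 0 1) ∧ Set.InjOn γ (Set.Icc 0 1) ∧
    γ 0 = pos u ∧ γ 1 = pos v ∧ arc h = γ '' Set.Icc (0 : ℝ) 1

namespace Drawing

variable {V : Type} {G : SimpleGraph V} (D : Drawing G)

/-- The interior of the arc of an edge (the arc minus its endpoints). -/
def arcInt ⦃u v : V⦄ (h : G.Adj u v) : Set (ℝ × ℝ) :=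
  D.arc h \ {D.pos u, D.pos v}

/-- The interior of the drawing of an abstract edge `e : Sym2 V`. -/
def edgeInt (e : Sym2 V) : Set (ℝ × ℝ) :=
  {p | ∃ (u v : V) (h : G.Adj u v), e = s(u, v) ∧ p ∈ D.arcInt h}

/-- Two edges cross if they are distinct and their interiors meet. -/
def Cross (e f : Sym2 V) : Prop :=
  e ≠ f ∧ (D.edgeInt e ∩ D.edgeInt f).Nonempty

/-- The set of crossing points of the drawing. -/
def crossingSet : Set (ℝ × ℝ) :=
  {p | ∃ e f : Sym2 V, e ≠ f ∧ p ∈ D.edgeInt e ∧ p ∈ D.edgeInt f}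

/-- A good drawing: no vertex lies on the arc of a non-incident edge, any two distinct
edges meet in at most one interior point, and edges sharing an endpoint do not cross. -/
def IsGood : Prop :=
  (∀ (w : V) ⦃u v : V⦄ (h : G.Adj u v), D.pos w ∈ D.arc h → w = u ∨ w = v) ∧
  (∀ e f : Sym2 V, e ≠ f → (D.edgeInt e ∩ D.edgeInt f).Subsingleton) ∧
  (∀ ⦃u v w : V⦄ (h₁ : G.Adj u v) (h₂ : G.Adj u w), v ≠ w →
    D.arcInt h₁ ∩ D.arcInt h₂ = ∅)

/-- A drawing is 1-planar if every edge is crossed at most once. -/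
def IsOnePlanar : Prop :=
  ∀ e : Sym2 V, {f : Sym2 V | D.Cross e f}.Subsingleton

/-- The number of crossings of the drawing (each unordered pair of crossing edges
contributes one crossing). -/
noncomputable def crNum : ℕ :=
  Set.ncard {p : Sym2 V × Sym2 V | D.Cross p.1 p.2} / 2

/-- The subset of the plane covered by the drawing. -/
def drawingSet : Set (ℝ × ℝ) :=
  Set.range D.pos ∪ ⋃ (u : V) (v : V) (h : G.Adj u v), D.arc h

/-- A face of the drawing: a connected component of the complement of the drawing. -/
def IsFace (F : Set (ℝ × ℝ)) : Prop :=
  ∃ p ∉ D.drawingSet, F = connectedComponentIn D.drawingSetᶜ p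

/-- The set `∂(F)` of vertices on the boundary of a face `F`. -/
def faceVerts (F : Set (ℝ × ℝ)) : Set V :=
  {v | D.pos v ∈ frontier F}

/-- A true face of the planarization `G^×`: a face of the drawing whose boundary
contains no crossing point (i.e. it is incident with no fake vertex). -/
def IsTrueFace (F : Set (ℝ × ℝ)) : Prop :=
  D.IsFace F ∧ ∀ p ∈ D.crossingSet, p ∉ frontier F

/-- Two faces are adjacent if their boundaries share a common edge of the planarization,
i.e. they share a boundary point that is neither a vertex nor a crossing point. -/
def FaceAdj (F₁ F₂ : Set (ℝ × ℝ)) : Prop :=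
  F₁ ≠ F₂ ∧ ∃ p, p ∈ frontier F₁ ∧ p ∈ frontier F₂ ∧
    p ∉ Set.range D.pos ∧ p ∉ D.crossingSet

/-- The planarization `G^×` (crossings made into vertices of degree `4`) is a
triangulation: every face of the drawing has exactly three vertices of `G^×`
(true vertices or crossing points) on its boundary. -/
def PlanarizationIsTriangulation : Prop :=
  ∀ F : Set (ℝ × ℝ), D.IsFace F →
    ((Set.range D.pos ∪ D.crossingSet) ∩ frontier F).ncard = 3

/-- A maximal 1-plane graph: the drawing is good and 1-planar, and no edge between two
distinct non-adjacent vertices can be added to the drawing so that the result is still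
a good 1-planar drawing. -/
def IsMaximalOnePlane : Prop :=
  D.IsGood ∧ D.IsOnePlanar ∧
  ∀ u v : V, u ≠ v → ¬G.Adj u v →
    ∀ D' : Drawing (G ⊔ SimpleGraph.fromEdgeSet {s(u, v)}),
      D'.pos = D.pos →
      (∀ ⦃x y : V⦄ (h : G.Adj x y),
        D'.arc ((SimpleGraph.sup_adj _ _ _ _).mpr (Or.inl h)) = D.arc h) →
      ¬(D'.IsGood ∧ D'.IsOnePlanar)

/-- A maximal 1-plane graph is immovable if its number of crossings does not exceed that
of any good 1-planar drawing obtained from it by redrawing exactly one edge. -/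
def Immovable : Prop :=
  ∀ D' : Drawing G, D'.IsGood → D'.IsOnePlanar → D'.pos = D.pos →
    (∃ (u v : V) (_ : G.Adj u v), ∀ ⦃x y : V⦄ (h' : G.Adj x y),
      s(x, y) ≠ s(u, v) → D'.arc h' = D.arc h') →
    D.crNum ≤ D'.crNum

/-- The drawing induced on a subgraph. -/
def restrict {H : SimpleGraph V} (hle : H ≤ G) : Drawing H where
  pos := D.pos
  pos_inj := D.pos_inj
  arc := fun _ _ h => D.arc (hle h)
  arc_symm := fun _ _ h => D.arc_symm (hle h)
  arc_isArc := fun _ _ h => D.arc_isArc (hle h)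

/-- `H` is a planar skeleton `G_P` of the 1-plane graph `(G, D)`: it is obtained from `G`
by removing exactly one edge from each pair of crossing edges. -/
def IsPlanarSkeleton {H : SimpleGraph V} (_ : H ≤ G) : Prop :=
  (∀ e f : Sym2 V, D.Cross e f → (e ∈ H.edgeSet ↔ f ∉ H.edgeSet)) ∧
  ∀ e ∈ G.edgeSet, (¬∃ f, D.Cross e f) → e ∈ H.edgeSet

/-- `c_G(v)`: the number of crossing edges of the drawing incident with `v`. -/
noncomputable def cDeg (v : V) : ℕ :=
  Set.ncard {w : V | G.Adj v w ∧ ∃ f, D.Cross s(v, w) f}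

end Drawing

/-- The crossing number of a graph: the least number of crossings in a good drawing. -/
noncomputable def crossingNumber {V : Type} (G : SimpleGraph V) : ℕ :=
  sInf {n | ∃ D : Drawing G, D.IsGood ∧ D.crNum = n}

/-- A graph is `k`-connected if it stays connected after deleting any set of fewer than
`k` vertices. -/
def KConnected {V : Type} (G : SimpleGraph V) (k : ℕ) : Prop :=
  ∀ S : Set V, S.ncard < k → (G.induce Sᶜ).Connected

/-- A graph is 1-planar if it admits a good 1-planar drawing. -/
def Is1Planar {V : Type} (G : SimpleGraph V) : Prop :=
  ∃ D : Drawing G, D.IsGood ∧ D.IsOnePlanar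

/-- A maximal 1-planar graph: 1-planar, and adding any edge between distinct
non-adjacent vertices destroys 1-planarity. -/
def IsMaximal1Planar {V : Type} (G : SimpleGraph V) : Prop :=
  Is1Planar G ∧ ∀ u v : V, u ≠ v → ¬G.Adj u v →
    ¬Is1Planar (G ⊔ SimpleGraph.fromEdgeSet {s(u, v)})


/-- `f` has a continuous logarithm on `S`. -/
def HasLogOn (f : ℂ → ℂ) (S : Set ℂ) : Prop :=
  ∃ g : ℂ → ℂ, ContinuousOn g S ∧ ∀ z ∈ S, Complex.exp (g z) = f z

lemma exists_log_of_continuous {X : Type} [TopologicalSpace X] [SimplyConnectedSpace X]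
    [LocallyPathConnectedSpace X] (f : X → ℂ) (hf : Continuous f) (h0 : ∀ x, f x ≠ 0) :
    ∃ g : X → ℂ, Continuous g ∧ ∀ x, Complex.exp (g x) = f x := by
  obtain ⟨x₀⟩ : Nonempty X := inferInstance
  rcases Complex.isCoveringMapOn_exp.existsUnique_continuousMap_lifts
    ⟨f, hf⟩ (a₀ := x₀) (e₀ := Complex.log (f x₀)) (Complex.exp_log (h0 x₀))
    (fun x ↦ h0 x) with ⟨g, ⟨-, hg⟩, -⟩
  exact ⟨g, g.continuous, fun x => congrFun hg x⟩

/-- A continuous function to `ℂ` all whose values satisfy `exp = 1` on a preconnected space is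
constant. -/
lemma const_of_exp_eq_one (φ : ℝ → ℂ) (hφ : Continuous φ) (h1 : ∀ t, Complex.exp (φ t) = 1)
    (s t : ℝ) : φ s = φ t := by
  have hmult : ∀ t, ∃ n : ℤ, φ t = n * (2 * Real.pi * Complex.I) := fun t =>
    Complex.exp_eq_one_iff.1 (h1 t)
  choose n hn using hmult
  have h2 : ∀ t, ((n t : ℤ) : ℝ) = (φ t).im / (2 * Real.pi) := by
    intro t
    rw [hn t]
    have : (Real.pi : ℝ) ≠ 0 := Real.pi_ne_zero
    simp
  have hc : Continuous (fun t => ((n t : ℤ) : ℝ)) := by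
    simp_rw [h2]
    fun_prop
  have hn' : Continuous n := by
    rw [Int.isClosedEmbedding_coe_real.isInducing.continuous_iff]
    exact hc
  have : n s = n t := isPreconnected_univ.constant hn'.continuousOn (mem_univ _) (mem_univ _)
  rw [hn, hn, this]

lemma winding_zero (φ : ℂ → ℂ) (hφ : Continuous φ) (x : ℂ) (R : ℝ) (hR : 0 < R) (m : ℤ)
    (h : ∀ z, ‖z - x‖ = R → Complex.exp (φ z) = (z - x) ^ m) : m = 0 := by
  set p : ℝ → ℂ := fun t => x + R * Complex.exp (t * Complex.I) with hp
  have hpc : Continuous p := by fun_prop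
  have hpx : ∀ t, p t - x = R * Complex.exp (t * Complex.I) := fun t => by simp [hp]
  have hnorm : ∀ t, ‖p t - x‖ = R := by
    intro t
    rw [hpx]
    simp [Complex.norm_exp_ofReal_mul_I, abs_of_pos hR]
  set ψ : ℝ → ℂ := fun t => φ (p t) - m * (Complex.log R + t * Complex.I) with hψ
  have hψc : Continuous ψ := by fun_prop
  have h1 : ∀ t, Complex.exp (ψ t) = 1 := by
    intro t
    have hR0 : (R : ℂ) ≠ 0 := by exact_mod_cast hR.ne'
    simp only [hψ]
    rw [Complex.exp_sub, h _ (hnorm t), Complex.exp_int_mul, Complex.exp_add,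
      Complex.exp_log hR0, hpx]
    apply div_self
    apply zpow_ne_zero
    exact mul_ne_zero hR0 (Complex.exp_ne_zero _)
  have h2 := const_of_exp_eq_one ψ hψc h1 0 (2 * Real.pi)
  have hp0 : p 0 = p (2 * Real.pi) := by
    simp [hp, Complex.exp_two_pi_mul_I]
  simp only [hψ, hp0] at h2
  have h3 : (m : ℂ) * (2 * Real.pi * Complex.I) = 0 := by
    push_cast at h2
    linear_combination h2
  rcases mul_eq_zero.1 h3 with h4 | h4
  · exact_mod_cast h4
  · exact absurd h4 Complex.two_pi_I_ne_zero

lemma frontier_component_subset {K : Set ℂ} (hK : IsClosed K) (x : ℂ) :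
    closure (connectedComponentIn Kᶜ x) ⊆ connectedComponentIn Kᶜ x ∪ K := by
  intro z hz
  by_cases hzK : z ∈ K
  · exact Or.inr hzK
  left
  have hzc : z ∈ Kᶜ := hzK
  have ho : IsOpen (connectedComponentIn Kᶜ z) := hK.isOpen_compl.connectedComponentIn
  obtain ⟨w, hw1, hw2⟩ := mem_closure_iff.1 hz _ ho (mem_connectedComponentIn hzc)
  rw [connectedComponentIn_eq hw2, ← connectedComponentIn_eq hw1]
  exact mem_connectedComponentIn hzc

/-- Borsuk–Eilenberg type independence lemma. -/
lemma eilenberg {K : Set ℂ} (hK : IsClosed K) {n : ℕ} (x : Fin n → ℂ) (y : ℂ)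
    (i : Fin n) (hxK : ∀ k, x k ∉ K) (hyK : y ∉ K)
    (hdist : ∀ k, k ≠ i → x k ∉ connectedComponentIn Kᶜ (x i))
    (hy : y ∉ connectedComponentIn Kᶜ (x i))
    (hb : Bornology.IsBounded (connectedComponentIn Kᶜ (x i)))
    (c : Fin n → ℤ)
    (hlog : HasLogOn (fun z => ∏ k, ((z - x k) / (z - y)) ^ c k) K) : c i = 0 := by
  classical
  obtain ⟨g, hgc, hg⟩ := hlog
  set U := connectedComponentIn Kᶜ (x i) with hU
  have hUo : IsOpen U := hK.isOpen_compl.connectedComponentIn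
  have hclU : closure U ⊆ U ∪ K := frontier_component_subset hK _
  have hxU : x i ∈ U := mem_connectedComponentIn (hxK i)
  have hUK : ∀ z ∈ U, z ∉ K := fun z hz => connectedComponentIn_subset _ _ hz
  -- Tietze
  obtain ⟨g', hg'⟩ := ContinuousMap.exists_restrict_eq hK
    ⟨K.domRestrict g, continuousOn_iff_continuous_domRestrict.mp hgc⟩
  have hg'g : ∀ z ∈ K, g' z = g z := by
    intro z hz
    have := congrArg (fun f => f ⟨z, hz⟩) hg'
    simpa using this
  -- remaining factor
  set q : ℂ → ℂ := fun z => (∏ k ∈ Finset.univ.erase i, ((z - x k) / (z - y)) ^ c k) *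
    ((z - y) ^ c i)⁻¹ with hq
  have hxcl : ∀ k, k ≠ i → x k ∉ closure U := by
    intro k hk h
    rcases hclU h with h | h
    · exact hdist k hk h
    · exact hxK k h
  have hycl : y ∉ closure U := by
    intro h
    rcases hclU h with h | h
    · exact hy h
    · exact hyK h
  have hy0 : ∀ z ∈ closure U, z - y ≠ 0 := fun z hz h => hycl (by rwa [← sub_eq_zero.1 h])
  have hx0 : ∀ k, k ≠ i → ∀ z ∈ closure U, z - x k ≠ 0 := fun k hk z hz h =>
    hxcl k hk (by rwa [← sub_eq_zero.1 h])
  have hq0 : ∀ z ∈ closure U, q z ≠ 0 := by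
    intro z hz
    refine mul_ne_zero (Finset.prod_ne_zero_iff.2 fun k hk => ?_) ?_
    · exact zpow_ne_zero _ (div_ne_zero (hx0 k (Finset.ne_of_mem_erase hk) z hz) (hy0 z hz))
    · exact inv_ne_zero (zpow_ne_zero _ (hy0 z hz))
  have hqc : ContinuousOn q (closure U) := by
    refine ContinuousOn.mul (continuousOn_finsetProd _ fun k hk => ?_) ?_
    · refine ContinuousOn.zpow₀ ?_ _ fun z hz => Or.inl ?_
      · exact ContinuousOn.div (by fun_prop) (by fun_prop) (fun z hz => hy0 z hz)
      · exact (div_ne_zero (hx0 k (Finset.ne_of_mem_erase hk) z hz) (hy0 z hz))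
    · refine ContinuousOn.inv₀ (ContinuousOn.zpow₀ (by fun_prop) _ fun z hz => Or.inl (hy0 z hz))
        fun z hz => zpow_ne_zero _ (hy0 z hz)
  set G : ℂ → ℂ := fun z => if z ∈ U then Complex.exp (g' z) / q z else (z - x i) ^ c i with hG
  have hfr : ∀ z ∈ frontier U, Complex.exp (g' z) / q z = (z - x i) ^ c i := by
    intro z hz
    have hzc : z ∈ closure U := hz.1
    have hzU : z ∉ U := by
      have := hz.2
      rwa [hUo.interior_eq] at this
    have hzK : z ∈ K := (hclU hzc).resolve_left hzU
    rw [hg'g z hzK, hg z hzK, div_eq_iff (hq0 z hzc)]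
    simp only [hq]
    rw [← Finset.mul_prod_erase _ _ (Finset.mem_univ i), div_zpow]
    field_simp
  have hGc : Continuous G := by
    refine continuous_if (p := fun z => z ∈ U) hfr ?_ ?_
    · refine ContinuousOn.div (by fun_prop) hqc hq0
    · refine ContinuousOn.zpow₀ (by fun_prop) _ fun z hz => Or.inl ?_
      intro h
      have hz' : z ∈ Uᶜ := by
        have h1 : IsClosed Uᶜ := hUo.isClosed_compl
        have h2 : z ∈ closure Uᶜ := hz
        rwa [h1.closure_eq] at h2
      exact hz' (by rwa [sub_eq_zero.1 h])
  have hG0 : ∀ z, G z ≠ 0 := by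
    intro z
    simp only [hG]
    split_ifs with h
    · exact div_ne_zero (Complex.exp_ne_zero _) (hq0 z (subset_closure h))
    · exact zpow_ne_zero _ fun h' => h (by rwa [sub_eq_zero.1 h'])
  obtain ⟨φ, hφc, hφ⟩ := exists_log_of_continuous G hGc hG0
  obtain ⟨R, hR0, hR⟩ := hb.subset_ball_lt 0 (x i)
  refine winding_zero φ hφc (x i) R hR0 (c i) fun z hz => ?_
  rw [hφ]
  have : z ∉ U := fun h => by
    have := hR h
    rw [Metric.mem_ball, dist_eq_norm, hz] at this
    exact lt_irrefl _ this
  simp [hG, this]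

/-- Every nonvanishing continuous function on `P` has a continuous logarithm. -/
def LogProp (P : Set ℂ) : Prop :=
  ∀ f : ℂ → ℂ, ContinuousOn f P → (∀ z ∈ P, f z ≠ 0) → HasLogOn f P

lemma exists_relation {ι : Type} [Fintype ι] (P : ι → Set ℂ) (hP : ∀ i, IsClosed (P i))
    (hfin : ∀ i j, i ≠ j → (P i ∩ P j).Finite) :
    ∃ N : ℕ, ∀ n, N < n → ∀ f : Fin n → ℂ → ℂ, (∀ k i, HasLogOn (f k) (P i)) →
      ∃ c : Fin n → ℤ, (∃ k, c k ≠ 0) ∧ HasLogOn (fun z => ∏ k, f k z ^ c k) (⋃ i, P i) := by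
  classical
  set W : Set (ι × ι × ℂ) := {t | t.1 ≠ t.2.1 ∧ t.2.2 ∈ P t.1 ∩ P t.2.1} with hW
  have hWf : W.Finite := by
    have : W ⊆ ⋃ i : ι, ⋃ j : ι, ⋃ (_ : i ≠ j), (fun z => (i, j, z)) '' (P i ∩ P j) := by
      rintro ⟨i, j, z⟩ ⟨h1, h2⟩
      simp only [mem_iUnion]
      exact ⟨i, j, h1, z, h2, rfl⟩
    refine Set.Finite.subset ?_ this
    refine Set.finite_iUnion fun i => Set.finite_iUnion fun j => Set.finite_iUnion fun h => ?_
    exact (hfin i j h).image _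
  have := hWf.fintype
  refine ⟨Fintype.card W, fun n hn f hlog => ?_⟩
  choose a hac ha using hlog
  have hN : ∀ (k : Fin n) (w : W), ∃ m : ℤ, a k w.1.1 w.1.2.2 =
      a k w.1.2.1 w.1.2.2 + m * (2 * Real.pi * Complex.I) := by
    rintro k ⟨⟨i, j, z⟩, h1, h2⟩
    apply Complex.exp_eq_exp_iff_exists_int.1
    rw [ha k _ _ h2.1, ha k _ _ h2.2]
  choose M hM using hN
  have hdep : ¬ LinearIndependent ℤ M := by
    intro h
    have := h.fintype_card_le_finrank
    simp only [Fintype.card_fin, Module.finrank_fintype_fun_eq_card] at this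
    omega
  obtain ⟨c, hc, hc0⟩ := Fintype.not_linearIndependent_iff.1 hdep
  refine ⟨c, hc0, ?_⟩
  set b : ι → ℂ → ℂ := fun i z => ∑ k, (c k : ℂ) * a k i z with hb
  have hagree : ∀ i j z, z ∈ P i → z ∈ P j → b i z = b j z := by
    intro i j z hi hj
    by_cases hij : i = j
    · rw [hij]
    have hw := congrFun hc ⟨(i, j, z), hij, hi, hj⟩
    simp only [Finset.sum_apply, Pi.smul_apply, Pi.zero_apply, smul_eq_mul] at hw
    simp only [hb]
    rw [← sub_eq_zero, ← Finset.sum_sub_distrib]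
    have : ∀ k, (c k : ℂ) * a k i z - c k * a k j z =
        ((c k * M k ⟨(i, j, z), hij, hi, hj⟩ : ℤ) : ℂ) * (2 * Real.pi * Complex.I) := by
      intro k
      have := hM k ⟨(i, j, z), hij, hi, hj⟩
      simp only at this
      rw [this]
      push_cast
      ring
    rw [Finset.sum_congr rfl fun k _ => this k, ← Finset.sum_mul, ← Int.cast_sum, hw]
    simp
  have hbexp : ∀ i, ∀ z ∈ P i, Complex.exp (b i z) = ∏ k, f k z ^ c k := by
    intro i z hz
    simp only [hb]
    rw [Complex.exp_sum]
    refine Finset.prod_congr rfl fun k _ => ?_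
    rw [Complex.exp_int_mul, ha k i z hz]
  have hbc : ∀ i, ContinuousOn (b i) (P i) := by
    intro i
    refine continuousOn_finsetSum _ fun k _ => ?_
    exact continuousOn_const.mul (hac k i)
  set g : ℂ → ℂ := fun z => if h : ∃ i, z ∈ P i then b h.choose z else 0 with hg
  have hgb : ∀ i, ∀ z ∈ P i, g z = b i z := by
    intro i z hz
    have h : ∃ i, z ∈ P i := ⟨i, hz⟩
    simp only [hg, dif_pos h]
    exact hagree _ _ _ h.choose_spec hz
  refine ⟨g, ?_, ?_⟩
  · refine LocallyFinite.continuousOn_iUnion (locallyFinite_of_finite _) hP fun i => ?_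
    exact (hbc i).congr (hgb i)
  · intro z hz
    obtain ⟨i, hi⟩ := mem_iUnion.1 hz
    rw [hgb i z hi, hbexp i z hi]

/-- `K` can be cut in finitely many arbitrarily small pieces having the logarithm property,
meeting pairwise in finite sets. -/
def FinePieces (K : Set ℂ) : Prop :=
  ∀ ε > 0, ∃ (ι : Type) (_ : Fintype ι) (P : ι → Set ℂ), K = ⋃ i, P i ∧ (∀ i, IsClosed (P i)) ∧
    (∀ i, ∀ x ∈ P i, ∀ y ∈ P i, dist x y < ε) ∧ (∀ i, LogProp (P i)) ∧
    (∀ i j, i ≠ j → (P i ∩ P j).Finite)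

lemma component_subset_ball {K : Set ℂ} {p : ℂ} {ε : ℝ} {x : ℂ} (hx : x ∈ Metric.ball p ε) :
    connectedComponentIn (K ∪ Metric.sphere p ε)ᶜ x ⊆ Metric.ball p ε := by
  by_cases hxK : x ∈ (K ∪ Metric.sphere p ε)ᶜ
  · refine isPreconnected_connectedComponentIn.subset_left_of_subset_union (u := Metric.ball p ε)
      (v := (Metric.closedBall p ε)ᶜ) Metric.isOpen_ball Metric.isClosed_closedBall.isOpen_compl
      ?_ ?_ ⟨x, mem_connectedComponentIn hxK, hx⟩
    · rw [Set.disjoint_compl_right_iff_subset]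
      exact Metric.ball_subset_closedBall
    · intro z hz
      have hz' := connectedComponentIn_subset _ _ hz
      simp only [mem_compl_iff, mem_union, Metric.mem_sphere, not_or] at hz'
      rcases lt_or_gt_of_ne hz'.2 with h | h
      · exact Or.inl h
      · right
        simpa using h
  · rw [connectedComponentIn_eq_empty hxK]
    exact empty_subset _

lemma finite_local_components {K : Set ℂ} (hKf : FinePieces K) (p : ℂ) {ε : ℝ}
    (hε : 0 < ε) :
    ∃ δ > 0, δ ≤ ε ∧ {C : Set ℂ | ∃ x ∈ Metric.ball p δ, x ∉ K ∧
      C = connectedComponentIn (K ∪ Metric.sphere p ε)ᶜ x}.Finite := by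
  classical
  obtain ⟨J, hJ, P, hKP, hPc, hPd, hPl, hPf⟩ := hKf ε hε
  set M : Set ℂ := Metric.sphere p ε ∪ ⋃ j : {j : J // p ∉ P j}, P j with hM
  have hMc : IsClosed M := Metric.isClosed_sphere.union (isClosed_iUnion_of_finite fun j => hPc _)
  have hpM : p ∉ M := by
    rintro (h | h)
    · rw [Metric.mem_sphere, dist_self] at h
      exact hε.ne h
    · obtain ⟨j, hj⟩ := mem_iUnion.1 h
      exact j.2 hj
  obtain ⟨d, hd0, hd⟩ := Metric.isOpen_iff.1 hMc.isOpen_compl p hpM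
  set Q : Option {j : J // p ∈ P j} → Set ℂ := fun o => o.elim M (fun j => P j) with hQ
  have hQc : ∀ o, IsClosed (Q o) := by
    rintro (_ | j)
    · exact hMc
    · exact hPc j
  have hjM : ∀ j : {j : J // p ∈ P j}, (P j ∩ M).Finite := by
    intro j
    have : P j ∩ M ⊆ ⋃ k : {j : J // p ∉ P j}, (P j ∩ P k) := by
      rintro z ⟨h1, h2 | h2⟩
      · have := hPd j _ h1 _ j.2
        rw [Metric.mem_sphere] at h2
        exact absurd h2 this.ne
      · obtain ⟨k, hk⟩ := mem_iUnion.1 h2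
        exact mem_iUnion.2 ⟨k, h1, hk⟩
    refine Set.Finite.subset (Set.finite_iUnion fun k => hPf _ _ ?_) this
    intro h
    exact k.2 (h ▸ j.2)
  have hQf : ∀ i j, i ≠ j → (Q i ∩ Q j).Finite := by
    rintro (_ | i) (_ | j) hij
    · exact absurd rfl hij
    · rw [inter_comm]; exact hjM j
    · exact hjM i
    · refine hPf _ _ fun h => hij ?_
      rw [Subtype.ext h]
  have hQU : ⋃ o, Q o = K ∪ Metric.sphere p ε := by
    ext z
    simp only [mem_iUnion, hKP, mem_union]
    constructor
    · rintro ⟨_ | j, h⟩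
      · rcases h with h | h
        · exact Or.inr h
        · obtain ⟨k, hk⟩ := mem_iUnion.1 h
          exact Or.inl ⟨k, hk⟩
      · exact Or.inl ⟨j, h⟩
    · rintro (⟨j, h⟩ | h)
      · by_cases hp : p ∈ P j
        · exact ⟨some ⟨j, hp⟩, h⟩
        · exact ⟨none, Or.inr (mem_iUnion.2 ⟨⟨j, hp⟩, h⟩)⟩
      · exact ⟨none, Or.inl h⟩
  obtain ⟨N, hN⟩ := exists_relation Q hQc hQf
  refine ⟨min (d / 3) ε, lt_min (by linarith) hε, min_le_right _ _, ?_⟩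
  by_contra hinf
  have hinf : Set.Infinite _ := hinf
  set e := hinf.natEmbedding with he
  choose X hXb hXK hX using fun m => (e m).2
  have hXne : ∀ m m', m ≠ m' → X m ∉ connectedComponentIn (K ∪ Metric.sphere p ε)ᶜ (X m') := by
    intro m m' hmm h
    have := connectedComponentIn_eq h
    rw [← hX, ← hX] at this
    exact hmm (e.injective (Subtype.ext this)).symm
  have hXε : ∀ m, X m ∈ Metric.ball p ε := fun m =>
    Metric.ball_subset_ball (min_le_right _ _) (hXb m)
  have hXd : ∀ m, dist (X m) p < d / 3 := fun m =>
    Metric.ball_subset_ball (min_le_left _ _) (hXb m)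
  have hXL : ∀ m, X m ∉ K ∪ Metric.sphere p ε := by
    rintro m (h | h)
    · exact hXK m h
    · have h1 := hXε m
      rw [Metric.mem_ball] at h1
      rw [Metric.mem_sphere] at h
      exact h1.ne h
  set x : Fin (N + 1) → ℂ := fun k => X (k + 1) with hx
  have hlog : ∀ (k : Fin (N + 1)) o, HasLogOn (fun z => (z - x k) / (z - X 0)) (Q o) := by
    rintro k (_ | j)
    · have hz : ∀ z ∈ M, (z - x k) / (z - X 0) ∈ Complex.slitPlane ∧ z - X 0 ≠ 0 := by
        intro z hz
        have hzd : d ≤ dist z p := by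
          by_contra h
          exact hd (Metric.mem_ball.2 (not_le.1 h)) hz
        have h1 := hXd 0
        have h2 := hXd (k + 1)
        have h3 := dist_triangle z (X 0) p
        have h4 := dist_triangle_right (X 0) (x k) p
        have h5 : dist (X 0) (x k) < dist z (X 0) := by
          simp only [hx] at h4 ⊢
          linarith
        have h6 : z - X 0 ≠ 0 := by
          rw [sub_ne_zero]
          rintro rfl
          rw [dist_self] at h5
          exact absurd h5 (not_lt.2 dist_nonneg)
        refine ⟨?_, h6⟩
        have h7 : (z - x k) / (z - X 0) = 1 + (X 0 - x k) / (z - X 0) := by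
          field_simp
          ring
        rw [h7]
        apply Complex.mem_slitPlane_of_norm_lt_one
        rw [norm_div, div_lt_one (norm_pos_iff.2 h6), ← dist_eq_norm, ← dist_eq_norm]
        exact h5
      refine ⟨fun z => Complex.log ((z - x k) / (z - X 0)), ?_, ?_⟩
      · refine ContinuousOn.clog ?_ fun z h => (hz z h).1
        exact ContinuousOn.div (by fun_prop) (by fun_prop) fun z h => (hz z h).2
      · intro z h
        exact Complex.exp_log (Complex.slitPlane_ne_zero (hz z h).1)
    · have hne : ∀ m, ∀ z ∈ P j, z - X m ≠ 0 := by
        intro m z hz h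
        apply hXK m
        rw [hKP, ← sub_eq_zero.1 h]
        exact mem_iUnion.2 ⟨_, hz⟩
      refine hPl j _ ?_ fun z hz => div_ne_zero (hne _ z hz) (hne _ z hz)
      exact ContinuousOn.div (by fun_prop) (by fun_prop) fun z h => hne _ z h
  obtain ⟨c, ⟨k, hk⟩, hc⟩ := hN (N + 1) (Nat.lt_succ_self _) _ hlog
  rw [hQU] at hc
  have hcl : IsClosed (K ∪ Metric.sphere p ε) := by
    rw [← hQU]
    exact isClosed_iUnion_of_finite hQc
  refine hk (eilenberg hcl x (X 0) k (fun k => hXL _) (hXL _) ?_ ?_ ?_ c hc)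
  · intro l hl
    refine hXne _ _ ?_
    intro h
    apply hl
    ext
    omega
  · exact hXne _ _ (by omega)
  · exact Metric.isBounded_ball.subset (component_subset_ball (hXε _))

/-- `x` and `y` are joined by an injective arc inside `S`. -/
def ArcIn {X : Type} [TopologicalSpace X] (x y : X) (S : Set X) : Prop :=
  ∃ γ : ℝ → X, ContinuousOn γ (Icc 0 1) ∧ InjOn γ (Icc 0 1) ∧ γ 0 = x ∧ γ 1 = y ∧
    ∀ t ∈ Icc (0 : ℝ) 1, γ t ∈ S

section Arcs

variable {X : Type} [TopologicalSpace X]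

lemma ArcIn.mono {x y : X} {S T : Set X} (h : ArcIn x y S) (hST : S ⊆ T) : ArcIn x y T := by
  obtain ⟨γ, h1, h2, h3, h4, h5⟩ := h
  exact ⟨γ, h1, h2, h3, h4, fun t ht => hST (h5 t ht)⟩

lemma ArcIn.ne {x y : X} {S : Set X} (h : ArcIn x y S) : x ≠ y := by
  obtain ⟨γ, h1, h2, h3, h4, h5⟩ := h
  rintro rfl
  have := h2 (by simp : (0 : ℝ) ∈ Icc (0 : ℝ) 1) (by simp : (1 : ℝ) ∈ Icc (0 : ℝ) 1)
    (h3.trans h4.symm)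
  norm_num at this

lemma affine_mem {s t u : ℝ} (hs : s ∈ Icc (0 : ℝ) 1) (ht : t ∈ Icc (0 : ℝ) 1)
    (hu : u ∈ Icc (0 : ℝ) 1) : s + u * (t - s) ∈ Icc (0 : ℝ) 1 := by
  obtain ⟨a, b⟩ := hs
  obtain ⟨c, d⟩ := ht
  obtain ⟨e, f⟩ := hu
  constructor <;> nlinarith

lemma subarc_cont {γ : ℝ → X} (h1 : ContinuousOn γ (Icc 0 1)) {s t : ℝ}
    (hs : s ∈ Icc (0 : ℝ) 1) (ht : t ∈ Icc (0 : ℝ) 1) :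
    ContinuousOn (fun u => γ (s + u * (t - s))) (Icc 0 1) :=
  h1.comp (by fun_prop) fun _ hu => affine_mem hs ht hu

lemma subarc_inj {γ : ℝ → X} (h2 : InjOn γ (Icc 0 1)) {s t : ℝ} (hs : s ∈ Icc (0 : ℝ) 1)
    (ht : t ∈ Icc (0 : ℝ) 1) (hst : s ≠ t) :
    InjOn (fun u => γ (s + u * (t - s))) (Icc 0 1) := by
  intro u hu v hv huv
  have := h2 (affine_mem hs ht hu) (affine_mem hs ht hv) huv
  have h0 : t - s ≠ 0 := sub_ne_zero.2 hst.symm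
  have h3 : (u - v) * (t - s) = 0 := by linarith
  rcases mul_eq_zero.1 h3 with h | h
  · linarith
  · exact absurd h h0

lemma subarc {γ : ℝ → X} (h1 : ContinuousOn γ (Icc 0 1)) (h2 : InjOn γ (Icc 0 1)) {s t : ℝ}
    (hs : s ∈ Icc (0 : ℝ) 1) (ht : t ∈ Icc (0 : ℝ) 1) (hst : s ≠ t) :
    ArcIn (γ s) (γ t) (γ '' Icc 0 1) :=
  ⟨_, subarc_cont h1 hs ht, subarc_inj h2 hs ht hst, by simp, by simp,
    fun _ hu => mem_image_of_mem _ (affine_mem hs ht hu)⟩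

lemma ArcIn.symm {x y : X} {S : Set X} (h : ArcIn x y S) : ArcIn y x S := by
  obtain ⟨γ, h1, h2, h3, h4, h5⟩ := h
  have := subarc h1 h2 (s := 1) (t := 0) (by simp) (by simp) (by norm_num)
  rw [h3, h4] at this
  refine this.mono ?_
  rintro _ ⟨t, ht, rfl⟩
  exact h5 t ht

/-- Concatenation of two arcs meeting only in the common endpoint. -/
lemma arc_glue {α β : ℝ → X} (hα : ContinuousOn α (Icc 0 1)) (hαi : InjOn α (Icc 0 1))
    (hβ : ContinuousOn β (Icc 0 1)) (hβi : InjOn β (Icc 0 1)) (hαβ : α 1 = β 0)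
    (hd : ∀ s ∈ Icc (0 : ℝ) 1, ∀ t ∈ Icc (0 : ℝ) 1, α s = β t → s = 1 ∧ t = 0) :
    ArcIn (α 0) (β 1) (α '' Icc 0 1 ∪ β '' Icc 0 1) := by
  set γ : ℝ → X := fun t => if t ≤ 1 / 2 then α (2 * t) else β (2 * t - 1) with hγ
  have m1 : ∀ t ∈ Icc (0 : ℝ) 1, t ≤ 1 / 2 → 2 * t ∈ Icc (0 : ℝ) 1 := fun t ht h =>
    ⟨by linarith [ht.1], by linarith⟩
  have m2 : ∀ t ∈ Icc (0 : ℝ) 1, ¬ t ≤ 1 / 2 → 2 * t - 1 ∈ Icc (0 : ℝ) 1 := fun t ht h =>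
    ⟨by linarith [ht.1], by linarith [ht.2]⟩
  refine ⟨γ, ?_, ?_, by simp [hγ], ?_, ?_⟩
  · have hsplit : Icc (0 : ℝ) 1 = Icc 0 (1 / 2) ∪ Icc (1 / 2) 1 := by
      rw [Icc_union_Icc_eq_Icc] <;> norm_num
    rw [hsplit]
    refine ContinuousOn.union_of_isClosed ?_ ?_ isClosed_Icc isClosed_Icc
    · have : ContinuousOn (fun t => α (2 * t)) (Icc 0 (1 / 2)) :=
        hα.comp (by fun_prop) fun t ht => ⟨by linarith [ht.1], by linarith [ht.2]⟩
      refine this.congr fun t ht => ?_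
      simp only [hγ]
      rw [if_pos ht.2]
    · have : ContinuousOn (fun t => β (2 * t - 1)) (Icc (1 / 2) 1) :=
        hβ.comp (by fun_prop) fun t ht => ⟨by linarith [ht.1], by linarith [ht.2]⟩
      refine this.congr fun t ht => ?_
      simp only [hγ]
      split_ifs with h
      · have : t = 1 / 2 := le_antisymm h ht.1
        subst this
        norm_num
        exact hαβ
      · rfl
  · intro s hs t ht hst
    simp only [hγ] at hst
    split_ifs at hst with h1 h2 h2
    · have := hαi (m1 s hs h1) (m1 t ht h2) hst
      linarith
    · have := (hd _ (m1 s hs h1) _ (m2 t ht h2) hst).2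
      linarith
    · have := (hd _ (m1 t ht h2) _ (m2 s hs h1) hst.symm).2
      linarith
    · have := hβi (m2 s hs h1) (m2 t ht h2) hst
      linarith
  · simp only [hγ]
    norm_num
  · intro t ht
    simp only [hγ]
    split_ifs with h
    · exact Or.inl (mem_image_of_mem _ (m1 t ht h))
    · exact Or.inr (mem_image_of_mem _ (m2 t ht h))

/-- First hitting point of an arc with another arc. -/
lemma first_hit [T2Space X] {α β : ℝ → X} (hα : ContinuousOn α (Icc 0 1))
    (hβ : ContinuousOn β (Icc 0 1)) (hαβ : α 1 ∈ β '' Icc 0 1) {s : ℝ} (hs : s ∈ Icc (0 : ℝ) 1) :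
    ∃ t ∈ Icc s 1, α t ∈ β '' Icc 0 1 ∧ ∀ u, s ≤ u → u < t → α u ∉ β '' Icc 0 1 := by
  have hBc : IsClosed (β '' Icc 0 1) := (isCompact_Icc.image_of_continuousOn hβ).isClosed
  have hα' : ContinuousOn α (Icc s 1) := hα.mono (Icc_subset_Icc_left hs.1)
  have hc : IsClosed (Icc s 1 ∩ α ⁻¹' (β '' Icc 0 1)) :=
    hα'.preimage_isClosed_of_isClosed isClosed_Icc hBc
  have hcomp : IsCompact (Icc s 1 ∩ α ⁻¹' (β '' Icc 0 1)) :=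
    isCompact_Icc.of_isClosed_subset hc inter_subset_left
  obtain ⟨t, ht, hmin⟩ := hcomp.exists_isLeast ⟨1, ⟨hs.2, le_rfl⟩, hαβ⟩
  refine ⟨t, ht.1, ht.2, fun u h1 h2 h3 => ?_⟩
  exact absurd (hmin ⟨⟨h1, h2.le.trans ht.1.2⟩, h3⟩) (not_le.2 h2)

lemma ArcIn.trans [T2Space X] {x y z : X} {A B : Set X} (h : ArcIn x y A) (h' : ArcIn y z B)
    (hxz : x ≠ z) : ArcIn x z (A ∪ B) := by
  obtain ⟨α, hα, hαi, hα0, hα1, hαA⟩ := h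
  obtain ⟨β, hβ, hβi, hβ0, hβ1, hβB⟩ := h'
  have hA : α '' Icc 0 1 ⊆ A := by rintro _ ⟨t, ht, rfl⟩; exact hαA t ht
  have hB : β '' Icc 0 1 ⊆ B := by rintro _ ⟨t, ht, rfl⟩; exact hβB t ht
  obtain ⟨t, ht, ⟨s, hs, hst⟩, hmin⟩ := first_hit hα hβ
    ⟨0, by simp, hβ0.trans hα1.symm⟩ (s := 0) (by simp)
  by_cases ht0 : t = 0
  · subst ht0
    have hs1 : s ≠ 1 := by
      rintro rfl
      exact hxz (by rw [← hα0, ← hst, hβ1])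
    have := subarc hβ hβi hs (by simp : (1 : ℝ) ∈ Icc (0 : ℝ) 1) hs1
    rw [hst, hα0, hβ1] at this
    exact this.mono (hB.trans subset_union_right)
  have hAt := subarc hα hαi (by simp : (0 : ℝ) ∈ Icc (0 : ℝ) 1) ht (Ne.symm ht0)
  by_cases hs1 : s = 1
  · subst hs1
    rw [← hst, hα0, hβ1] at hAt
    exact hAt.mono (hA.trans subset_union_left)
  have h0 : (0 : ℝ) ∈ Icc (0 : ℝ) 1 := by simp
  have h1 : (1 : ℝ) ∈ Icc (0 : ℝ) 1 := by simp
  have key := arc_glue (subarc_cont hα h0 ht) (subarc_inj hαi h0 ht (Ne.symm ht0))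
    (subarc_cont hβ hs h1) (subarc_inj hβi hs h1 hs1) (by simp [hst]) ?_
  · have e0 : α (0 + 0 * (t - 0)) = x := by simp [hα0]
    have e1 : β (s + 1 * (1 - s)) = z := by simp [hβ1]
    rw [e0, e1] at key
    refine key.mono (union_subset_union ?_ ?_)
    · rintro _ ⟨u, hu, rfl⟩
      exact hαA _ (affine_mem h0 ht hu)
    · rintro _ ⟨u, hu, rfl⟩
      exact hβB _ (affine_mem hs h1 hu)
  · intro u hu v hv huv
    have hu1 : u = 1 := by
      by_contra hne
      have hlt : u < 1 := lt_of_le_of_ne hu.2 hne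
      have htpos : 0 < t := lt_of_le_of_ne ht.1 (Ne.symm ht0)
      refine hmin (0 + u * (t - 0)) (affine_mem h0 ht hu).1 (by nlinarith) ?_
      exact ⟨_, affine_mem hs h1 hv, huv.symm⟩
    refine ⟨hu1, ?_⟩
    subst hu1
    have : β (s + v * (1 - s)) = β s := by
      rw [hst, ← huv]; simp
    have := hβi (affine_mem hs h1 hv) hs this
    have h3 : v * (1 - s) = 0 := by linarith
    rcases mul_eq_zero.1 h3 with h | h
    · exact h
    · exact absurd (by linarith) hs1

end Arcs

lemma arcIn_of_open_connected {E : Type} [NormedAddCommGroup E]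
    [NormedSpace ℝ E] {U : Set E} (hU : IsOpen U) (hc : IsPreconnected U) {x y : E}
    (hx : x ∈ U) (hy : y ∈ U) (hxy : x ≠ y) : ArcIn x y U := by
  have := hc.induction₂' (fun x y => x = y ∨ ArcIn x y U) ?_ ?_ hx hy
  · exact this.resolve_left hxy
  · intro x hx
    obtain ⟨ε, hε, hball⟩ := Metric.isOpen_iff.1 hU x hx
    have : ∀ᶠ y in nhdsWithin x U, y ∈ Metric.ball x ε :=
      mem_nhdsWithin_of_mem_nhds (Metric.ball_mem_nhds x hε)
    filter_upwards [this] with y hy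
    by_cases hxy : x = y
    · exact ⟨Or.inl hxy, Or.inl hxy.symm⟩
    have harc : ArcIn x y U := by
      refine ⟨fun t => x + t • (y - x), by fun_prop, ?_, by simp, by simp, ?_⟩
      · intro s _ t _ hst
        have h1 : (s - t) • (y - x) = 0 := by
          have : x + s • (y - x) = x + t • (y - x) := hst
          rw [sub_smul, add_left_cancel this, sub_self]
        rcases smul_eq_zero.1 h1 with h | h
        · exact sub_eq_zero.1 h
        · exact absurd (sub_eq_zero.1 h).symm hxy
      · intro t ht
        apply hball
        rw [Metric.mem_ball, dist_eq_norm] at hy ⊢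
        simp only [add_sub_cancel_left, norm_smul, Real.norm_eq_abs,
          abs_of_nonneg ht.1]
        calc t * ‖y - x‖ ≤ 1 * ‖y - x‖ := by gcongr; exact ht.2
          _ < ε := by simpa using hy
    exact ⟨Or.inr harc, Or.inr harc.symm⟩
  · rintro x y z hx hy hz (rfl | h1) (rfl | h2)
    · exact Or.inl rfl
    · exact Or.inr h2
    · exact Or.inr h1
    · by_cases hxz : x = z
      · exact Or.inl hxz
      · right
        simpa using h1.trans h2 hxz

/-- Loop erasure for consecutive arcs. -/
lemma erase_loops {X : Type} [TopologicalSpace X] [T2Space X] (α : ℕ → ℝ → X)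
    (hα : ∀ n, ContinuousOn (α n) (Icc 0 1)) (hαi : ∀ n, InjOn (α n) (Icc 0 1))
    (hcon : ∀ n, α n 1 = α (n + 1) 0) (h00 : α 0 0 ∉ α 1 '' Icc 0 1)
    (hdis : ∀ n m, n + 2 ≤ m → ∀ s ∈ Icc (0 : ℝ) 1, ∀ t ∈ Icc (0 : ℝ) 1, α n s ≠ α m t) :
    ∃ β : ℕ → ℝ → X, (∀ n, ContinuousOn (β n) (Icc 0 1)) ∧ (∀ n, InjOn (β n) (Icc 0 1)) ∧
      (∀ n, β n 1 = β (n + 1) 0) ∧ (∀ n, ∀ t ∈ Icc (0 : ℝ) 1, β n t ∈ α n '' Icc 0 1) ∧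
      ∀ n m, n < m → ∀ s ∈ Ico (0 : ℝ) 1, ∀ t ∈ Icc (0 : ℝ) 1, β n s ≠ β m t := by
  classical
  have hstep : ∀ n, ∀ s : Icc (0 : ℝ) 1, ∃ t s' : Icc (0 : ℝ) 1,
      s.1 ≤ t.1 ∧ α n t = α (n + 1) s' ∧
      ∀ u, s.1 ≤ u → u < t.1 → α n u ∉ α (n + 1) '' Icc 0 1 := by
    intro n s
    obtain ⟨t, ht, ⟨s', hs', hst⟩, hmin⟩ := first_hit (hα n) (hα (n + 1))
      ⟨0, by simp, (hcon n).symm⟩ s.2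
    exact ⟨⟨t, s.2.1.trans ht.1, ht.2⟩, ⟨s', hs'⟩, ht.1, hst.symm, hmin⟩
  choose T S hT1 hT2 hT3 using hstep
  obtain ⟨s, hs0, hsS⟩ : ∃ s : ℕ → Icc (0 : ℝ) 1, (s 0).1 = 0 ∧ ∀ n, s (n + 1) = S n (s n) :=
    ⟨fun n => Nat.rec (motive := fun _ => Icc (0 : ℝ) 1) ⟨0, by simp⟩ (fun n s => S n s) n,
      rfl, fun _ => rfl⟩
  set t : ℕ → Icc (0 : ℝ) 1 := fun n => T n (s n) with ht
  have hts : ∀ n, α n (t n) = α (n + 1) (s (n + 1)) := fun n => by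
    rw [hsS]
    exact hT2 n (s n)
  have hne : ∀ n, (s n : ℝ) ≠ t n := by
    intro n hn
    have h1 := hts n
    rw [← hn] at h1
    rcases n with _ | n
    · exact h00 ⟨s 1, (s 1).2, h1.symm.trans (congrArg (α 0) hs0)⟩
    · have h2 := hts n
      rw [h1] at h2
      exact hdis n (n + 2) le_rfl _ (t n).2 _ (s (n + 2)).2 h2
  have hlt : ∀ n, (s n : ℝ) < t n := fun n => lt_of_le_of_ne (hT1 n (s n)) (hne n)
  refine ⟨fun n u => α n (s n + u * (t n - s n)), fun n => subarc_cont (hα n) (s n).2 (t n).2,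
    fun n => subarc_inj (hαi n) (s n).2 (t n).2 (hne n), ?_, ?_, ?_⟩
  · intro n
    have := hts n
    simpa using this
  · intro n u hu
    exact mem_image_of_mem _ (affine_mem (s n).2 (t n).2 hu)
  · intro n m hnm u hu v hv
    have hu' : u ∈ Icc (0 : ℝ) 1 := Ico_subset_Icc_self hu
    rcases Nat.lt_or_ge m (n + 2) with h | h
    · obtain rfl : m = n + 1 := by omega
      intro heq
      refine hT3 n (s n) (s n + u * (t n - s n)) ?_ ?_
        ⟨_, affine_mem (s (n + 1)).2 (t (n + 1)).2 hv, heq.symm⟩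
      · nlinarith [hlt n, hu.1]
      · have := hlt n
        have h2 := hu.2
        change _ < (t n : ℝ)
        nlinarith
    · exact hdis n m h _ (affine_mem (s n).2 (t n).2 hu') _ (affine_mem (s m).2 (t m).2 hv)

/-- Infinite concatenation of arcs converging to a point. -/
lemma ray_arc (p : ℂ) (β : ℕ → ℝ → ℂ)
    (hβ : ∀ n, ContinuousOn (β n) (Icc 0 1)) (hβi : ∀ n, InjOn (β n) (Icc 0 1))
    (hcon : ∀ n, β n 1 = β (n + 1) 0)
    (hdis : ∀ n m, n < m → ∀ s ∈ Ico (0 : ℝ) 1, ∀ t ∈ Icc (0 : ℝ) 1, β n s ≠ β m t)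
    (hp : ∀ n, ∀ t ∈ Icc (0 : ℝ) 1, β n t ≠ p)
    (hlim : ∀ ε > 0, ∃ N, ∀ n ≥ N, ∀ t ∈ Icc (0 : ℝ) 1, dist (β n t) p < ε) :
    ∃ γ : ℝ → ℂ, ContinuousOn γ (Icc 0 1) ∧ InjOn γ (Icc 0 1) ∧ γ 0 = p ∧
      ∀ t ∈ Ioc (0 : ℝ) 1, ∃ n, ∃ s ∈ Icc (0 : ℝ) 1, γ t = β n s := by
  set Γ : ℝ → ℂ := fun τ => β ⌊τ⌋₊ (τ - ⌊τ⌋₊) with hΓ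
  have hfr : ∀ τ : ℝ, 0 ≤ τ → τ - ⌊τ⌋₊ ∈ Ico (0 : ℝ) 1 := fun τ hτ =>
    ⟨by linarith [Nat.floor_le hτ], by linarith [Nat.lt_floor_add_one τ]⟩
  have hΓn : ∀ n : ℕ, ∀ τ ∈ Icc (n : ℝ) (n + 1), Γ τ = β n (τ - n) := by
    intro n τ hτ
    rcases eq_or_lt_of_le hτ.2 with h | h
    · subst h
      have : ⌊(n : ℝ) + 1⌋₊ = n + 1 := by
        have := Nat.floor_natCast (R := ℝ) (n + 1)
        push_cast at this
        exact this
      simp only [hΓ]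
      rw [this]
      push_cast
      simp [hcon n]
    · have : ⌊τ⌋₊ = n := by
        rw [Nat.floor_eq_iff (le_trans (Nat.cast_nonneg _) hτ.1)]
        exact ⟨hτ.1, h⟩
      simp only [hΓ, this]
  have hΓc1 : ∀ n : ℕ, ContinuousOn Γ (Icc (n : ℝ) (n + 1)) := by
    intro n
    have : ContinuousOn (fun τ => β n (τ - n)) (Icc (n : ℝ) (n + 1)) :=
      (hβ n).comp (by fun_prop) fun τ hτ => ⟨by linarith [hτ.1], by linarith [hτ.2]⟩
    exact this.congr (hΓn n)
  have hΓc2 : ∀ n : ℕ, ContinuousOn Γ (Icc (0 : ℝ) n) := by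
    intro n
    induction n with
    | zero => simp
    | succ n ih =>
      have : Icc (0 : ℝ) ((n + 1 : ℕ) : ℝ) = Icc 0 (n : ℝ) ∪ Icc (n : ℝ) (n + 1) := by
        rw [Icc_union_Icc_eq_Icc (Nat.cast_nonneg _) (by linarith)]
        push_cast
        rfl
      rw [this]
      exact ih.union_of_isClosed (hΓc1 n) isClosed_Icc isClosed_Icc
  have hΓc : ContinuousOn Γ (Ici 0) := by
    intro τ hτ
    obtain ⟨n, hn⟩ := exists_nat_gt τ
    refine (hΓc2 n τ ⟨hτ, hn.le⟩).mono_of_mem_nhdsWithin ?_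
    have : Ici (0 : ℝ) ∩ Iio (n : ℝ) ∈ nhdsWithin τ (Ici 0) :=
      inter_mem_nhdsWithin _ (Iio_mem_nhds hn)
    exact Filter.mem_of_superset this fun x hx => ⟨hx.1, (hx.2 : x < n).le⟩
  have hΓi' : ∀ σ τ : ℝ, 0 ≤ σ → σ < τ → Γ σ ≠ Γ τ := by
    intro σ τ hσ hστ heq
    have hτ : 0 ≤ τ := hσ.trans hστ.le
    rcases eq_or_lt_of_le (Nat.floor_le_floor hστ.le) with h | h
    · have h1 : β ⌊σ⌋₊ (σ - ⌊σ⌋₊) = β ⌊τ⌋₊ (τ - ⌊τ⌋₊) := heq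
      rw [h] at h1
      have h2 := Ico_subset_Icc_self (hfr σ hσ)
      rw [h] at h2
      have := hβi _ h2 (Ico_subset_Icc_self (hfr τ hτ)) h1
      linarith
    · exact hdis _ _ h _ (hfr σ hσ) _ (Ico_subset_Icc_self (hfr τ hτ)) heq
  have hΓi : InjOn Γ (Ici 0) := by
    intro σ hσ τ hτ h
    rcases lt_trichotomy σ τ with h1 | h1 | h1
    · exact absurd h (hΓi' _ _ hσ h1)
    · exact h1
    · exact absurd h.symm (hΓi' _ _ hτ h1)
  set γ : ℝ → ℂ := fun t => if t ≤ 0 then p else Γ (1 / t - 1) with hγ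
  have hpar : ∀ t ∈ Ioc (0 : ℝ) 1, 0 ≤ 1 / t - 1 := by
    intro t ht
    have := one_le_one_div ht.1 ht.2
    linarith
  have hγt : ∀ t, 0 < t → γ t = Γ (1 / t - 1) := fun t ht => by simp [hγ, ht]
  have hγ0 : γ 0 = p := by simp [hγ]
  have hΓp : ∀ τ, 0 ≤ τ → Γ τ ≠ p := fun τ hτ => hp _ _ (Ico_subset_Icc_self (hfr τ hτ))
  refine ⟨γ, ?_, ?_, hγ0, ?_⟩
  · intro t ht
    rcases eq_or_lt_of_le ht.1 with h | h
    · subst h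
      rw [ContinuousWithinAt, hγ0, Metric.tendsto_nhdsWithin_nhds]
      intro ε hε
      obtain ⟨N, hN⟩ := hlim ε hε
      refine ⟨1 / (N + 1), by positivity, fun {t} ht htd => ?_⟩
      rcases eq_or_lt_of_le ht.1 with h | h
      · rw [← h, hγ0, dist_self]
        exact hε
      · rw [hγt t h]
        have h1 := hpar t ⟨h, ht.2⟩
        refine hN _ ?_ _ (Ico_subset_Icc_self (hfr _ h1))
        apply Nat.le_floor
        rw [Real.dist_eq, sub_zero, abs_of_pos h] at htd
        have : (N : ℝ) + 1 < 1 / t := by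
          rw [lt_div_iff₀ h]
          rwa [lt_div_iff₀ (by positivity), mul_comm] at htd
        linarith
    · have h1 : ContinuousOn (fun t => Γ (1 / t - 1)) (Ioc 0 1) := by
        refine hΓc.comp ?_ hpar
        refine ContinuousOn.sub (ContinuousOn.div continuousOn_const continuousOn_id ?_)
          continuousOn_const
        intro x hx
        exact hx.1.ne'
      have h2 : ContinuousOn γ (Ioc 0 1) := h1.congr fun t ht => hγt t ht.1
      refine (h2 t ⟨h, ht.2⟩).mono_of_mem_nhdsWithin ?_
      have : Icc (0 : ℝ) 1 ∩ Ioi (0 : ℝ) ∈ nhdsWithin t (Icc 0 1) :=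
        inter_mem_nhdsWithin _ (Ioi_mem_nhds h)
      exact Filter.mem_of_superset this fun x hx => ⟨hx.2, hx.1.2⟩
  · intro s hs t ht hst
    rcases eq_or_lt_of_le hs.1 with h | h <;> rcases eq_or_lt_of_le ht.1 with h' | h'
    · rw [← h, ← h']
    · rw [← h, hγ0, hγt t h'] at hst
      exact absurd hst.symm (hΓp _ (hpar t ⟨h', ht.2⟩))
    · rw [← h', hγ0, hγt s h] at hst
      exact absurd hst (hΓp _ (hpar s ⟨h, hs.2⟩))
    · rw [hγt s h, hγt t h'] at hst
      have := hΓi (hpar s ⟨h, hs.2⟩) (hpar t ⟨h', ht.2⟩) hst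
      have h3 : 1 / s = 1 / t := by linarith
      simpa using h3
  · intro t ht
    rw [hγt t ht.1]
    exact ⟨_, _, Ico_subset_Icc_self (hfr _ (hpar t ht)), rfl⟩

/-- A region of the complement of `K` which near `p` is a union of local components, and has
`p` in its closure. -/
def GoodAt (K : Set ℂ) (p : ℂ) (U : Set ℂ) : Prop :=
  IsOpen U ∧ IsPreconnected U ∧ p ∈ closure U ∧ U ⊆ Kᶜ ∧
    ∃ ε > 0, ∀ C : Set ℂ, IsPreconnected C → C ⊆ Kᶜ → C ⊆ Metric.ball p ε →
      (C ∩ U).Nonempty → C ⊆ U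

lemma GoodAt.step {K : Set ℂ} (hK : IsClosed K) (hKf : FinePieces K) {p : ℂ} {U : Set ℂ}
    (hU : GoodAt K p U) {r : ℝ} (hr : 0 < r) :
    ∃ U', GoodAt K p U' ∧ U' ⊆ U ∧ U' ⊆ Metric.ball p r := by
  obtain ⟨hUo, hUc, hpU, hUK, ε₀, hε₀, hloc⟩ := hU
  set ε := min r ε₀ with hε
  have hεp : 0 < ε := lt_min hr hε₀
  obtain ⟨δ, hδ, hδε, hfin⟩ := finite_local_components hKf p hεp
  set L := (K ∪ Metric.sphere p ε)ᶜ with hL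
  have hLo : IsOpen L := (hK.union Metric.isClosed_sphere).isOpen_compl
  have hLK : L ⊆ Kᶜ := fun z hz h => hz (Or.inl h)
  set 𝒞 := {C : Set ℂ | ∃ x ∈ Metric.ball p δ, x ∉ K ∧ C = connectedComponentIn L x} with h𝒞
  set 𝒟 := {C ∈ 𝒞 | (C ∩ U).Nonempty} with h𝒟
  have h𝒟f : 𝒟.Finite := hfin.subset (sep_subset _ _)
  have hxL : ∀ x ∈ Metric.ball p δ, x ∉ K → x ∈ L := by
    rintro x hx hxK (h | h)
    · exact hxK h
    · rw [Metric.mem_sphere] at h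
      rw [Metric.mem_ball] at hx
      linarith
  have hcov : Metric.ball p δ ∩ U ⊆ ⋃ C ∈ 𝒟, C := by
    rintro x ⟨hx, hxU⟩
    have hxK : x ∉ K := hUK hxU
    have hmem := mem_connectedComponentIn (hxL x hx hxK)
    exact mem_biUnion (x := connectedComponentIn L x) ⟨⟨x, hx, hxK, rfl⟩, x, hmem, hxU⟩ hmem
  have hp : p ∈ closure (⋃ C ∈ 𝒟, C) := by
    refine closure_mono hcov ?_
    rw [mem_closure_iff] at hpU ⊢
    intro o ho hpo
    obtain ⟨z, hz1, hz2⟩ := hpU (o ∩ Metric.ball p δ) (ho.inter Metric.isOpen_ball)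
      ⟨hpo, Metric.mem_ball_self hδ⟩
    exact ⟨z, hz1.1, hz1.2, hz2⟩
  rw [h𝒟f.closure_biUnion] at hp
  obtain ⟨C, hC, hpC⟩ := mem_iUnion₂.1 hp
  obtain ⟨⟨x, hx, hxK, rfl⟩, hCU⟩ := hC
  have hxε : x ∈ Metric.ball p ε := Metric.ball_subset_ball hδε hx
  have hball : connectedComponentIn L x ⊆ Metric.ball p ε := component_subset_ball hxε
  refine ⟨connectedComponentIn L x, ⟨hLo.connectedComponentIn,
    isPreconnected_connectedComponentIn, hpC, (connectedComponentIn_subset _ _).trans hLK,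
    ε, hεp, ?_⟩, ?_, ?_⟩
  · rintro C hCc hCK hCb ⟨w, hwC, hw⟩
    rw [connectedComponentIn_eq hw]
    refine hCc.subset_connectedComponentIn hwC ?_
    rintro z hz (h | h)
    · exact hCK hz h
    · have := hCb hz
      rw [Metric.mem_sphere] at h
      rw [Metric.mem_ball] at this
      linarith
  · exact hloc _ isPreconnected_connectedComponentIn ((connectedComponentIn_subset _ _).trans hLK)
      (hball.trans (Metric.ball_subset_ball (min_le_right _ _))) hCU
  · exact hball.trans (Metric.ball_subset_ball (min_le_left _ _))

/-- Boundary points of regions are accessible by arcs. -/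
lemma accessible {K : Set ℂ} (hK : IsClosed K) (hKf : FinePieces K) {p : ℂ} (hpK : p ∈ K)
    {F : Set ℂ} (hF : GoodAt K p F) :
    ∃ γ : ℝ → ℂ, ContinuousOn γ (Icc 0 1) ∧ InjOn γ (Icc 0 1) ∧ γ 0 = p ∧
      ∀ t ∈ Ioc (0 : ℝ) 1, γ t ∈ F := by
  classical
  let St := {s : Set ℂ × ℂ × ℝ // GoodAt K p s.1 ∧ s.2.1 ∈ s.1 ∧ 0 < s.2.2 ∧ s.2.2 ≤ dist s.2.1 p}
  have hstep : ∀ s : St, ∃ (s' : St) (α : ℝ → ℂ), s'.1.1 ⊆ s.1.1 ∧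
      s'.1.1 ⊆ Metric.ball p s.1.2.2 ∧ s'.1.2.2 ≤ s.1.2.2 / 2 ∧
      ContinuousOn α (Icc 0 1) ∧ InjOn α (Icc 0 1) ∧ α 0 = s.1.2.1 ∧ α 1 = s'.1.2.1 ∧
      ∀ t ∈ Icc (0 : ℝ) 1, α t ∈ s.1.1 ∧ s'.1.2.2 ≤ dist (α t) p := by
    rintro ⟨⟨U, x, r⟩, hU, hx, hr, hrx⟩
    obtain ⟨U', hU', hU'U, hU'r⟩ := hU.step hK hKf hr
    simp only at hx hr hrx
    obtain ⟨x', hx'⟩ : U'.Nonempty := by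
      rw [← closure_nonempty_iff]
      exact ⟨p, hU'.2.2.1⟩
    have hne : x ≠ x' := by
      rintro rfl
      have := hU'r hx'
      rw [Metric.mem_ball] at this
      linarith
    obtain ⟨α, h1, h2, h3, h4, h5⟩ :=
      arcIn_of_open_connected hU.1 hU.2.1 hx (hU'U hx') hne
    have hcl : IsClosed (α '' Icc 0 1) := (isCompact_Icc.image_of_continuousOn h1).isClosed
    have hpα : p ∉ α '' Icc 0 1 := by
      rintro ⟨t, ht, h⟩
      exact hU.2.2.2.1 (h5 t ht) (h ▸ hpK)
    obtain ⟨d, hd, hdb⟩ := Metric.isOpen_iff.1 hcl.isOpen_compl p hpα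
    have hdist : ∀ t ∈ Icc (0 : ℝ) 1, min (r / 2) d ≤ dist (α t) p := by
      intro t ht
      refine (min_le_right _ _).trans ?_
      by_contra h
      exact hdb (Metric.mem_ball.2 (not_le.1 h)) ⟨t, ht, rfl⟩
    refine ⟨⟨(U', x', min (r / 2) d), hU', hx', lt_min (by positivity) hd, ?_⟩, α, hU'U, hU'r,
      min_le_left _ _, h1, h2, h3, h4, fun t ht => ⟨h5 t ht, hdist t ht⟩⟩
    have := hdist 1 (by simp)
    rwa [h4] at this
  choose nxt α hsub hball hhalf hαc hαi hα0 hα1 hαU using hstep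
  obtain ⟨x₀, hx₀⟩ : F.Nonempty := by
    rw [← closure_nonempty_iff]
    exact ⟨p, hF.2.2.1⟩
  have hx₀p : 0 < dist x₀ p := by
    rw [dist_pos]
    rintro rfl
    exact hF.2.2.2.1 hx₀ hpK
  let s₀ : St := ⟨(F, x₀, dist x₀ p), hF, hx₀, hx₀p, le_rfl⟩
  let s : ℕ → St := fun n => Nat.rec s₀ (fun _ s => nxt s) n
  have hs : ∀ n, s (n + 1) = nxt (s n) := fun n => rfl
  have hanti : Antitone fun n => (s n).1.1 := antitone_nat_of_succ_le fun n => hsub (s n)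
  have hr : ∀ n, (s n).1.2.2 ≤ dist x₀ p * (1 / 2) ^ n := by
    intro n
    induction n with
    | zero => simp [s, s₀]
    | succ n ih =>
      have := hhalf (s n)
      rw [hs, pow_succ]
      linarith
  have hαF : ∀ n, ∀ t ∈ Icc (0 : ℝ) 1, α (s n) t ∈ (s n).1.1 := fun n t ht => (hαU (s n) t ht).1
  obtain ⟨β, hβc, hβi, hβcon, hβα, hβd⟩ := erase_loops (fun n => α (s n)) (fun n => hαc _)
    (fun n => hαi _) (fun n => by rw [hα1, hα0, hs]) (by
      rintro ⟨t, ht, h⟩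
      have h1 := hball (s 0) (hαF 1 t ht)
      have h2 := (s 0).2.2.2.2
      rw [h, hα0, Metric.mem_ball] at h1
      linarith) (by
      intro n m hnm u hu v hv heq
      have h1 := hanti hnm (hαF m v hv)
      have h2 := hball (s (n + 1)) h1
      have h3 := (hαU (s n) u hu).2
      rw [Metric.mem_ball, ← heq, hs] at h2
      linarith)
  obtain ⟨γ, hγc, hγi, hγ0, hγ⟩ := ray_arc p β hβc hβi hβcon hβd (by
      intro n t ht h
      obtain ⟨u, hu, hu'⟩ := hβα n t ht
      have := (s n).2.1.2.2.2.1 (hαF n u hu)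
      rw [hu', h] at this
      exact this hpK) (by
      intro ε hε
      obtain ⟨N, hN⟩ := exists_pow_lt_of_lt_one (div_pos hε hx₀p) (by norm_num : (1 / 2 : ℝ) < 1)
      refine ⟨N + 1, fun n hn t ht => ?_⟩
      obtain ⟨u, hu, hu'⟩ := hβα n t ht
      have h1 := hball (s N) (hanti hn (hαF n u hu))
      rw [hu', Metric.mem_ball] at h1
      have h2 := hr N
      rw [lt_div_iff₀ hx₀p] at hN
      linarith)
  refine ⟨γ, hγc, hγi, hγ0, fun t ht => ?_⟩
  obtain ⟨n, u, hu, h⟩ := hγ t ht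
  obtain ⟨v, hv, hv'⟩ := hβα n u hu
  rw [h, ← hv']
  exact hanti (Nat.zero_le n) (hαF n v hv)

lemma logProp_arc {γ : ℝ → ℂ} {a b : ℝ} (hab : a ≤ b) (hγ : ContinuousOn γ (Icc a b))
    (hi : InjOn γ (Icc a b)) : LogProp (γ '' Icc a b) := by
  intro f hf h0
  have hc : Continuous (fun t : Icc a b => γ t) := continuousOn_iff_continuous_domRestrict.1 hγ
  have hinj : Function.Injective (fun t : Icc a b => γ t) := fun s t h =>
    Subtype.ext (hi s.2 t.2 h)
  have hemb : Topology.IsClosedEmbedding (fun t : Icc a b => γ t) :=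
    hc.isClosedEmbedding hinj
  have hfγ : Continuous (fun t : Icc a b => f (γ t)) :=
    hf.comp_continuous hc fun t => ⟨t, t.2, rfl⟩
  obtain ⟨g, hg, hge⟩ := exists_log_of_continuous (fun t : ℝ => f (γ (projIcc a b hab t)))
    (hfγ.comp continuous_projIcc) (fun t => h0 _ ⟨_, (projIcc a b hab t).2, rfl⟩)
  obtain ⟨G, hG⟩ := ContinuousMap.exists_extension hemb
    ⟨fun t : Icc a b => g t, hg.comp continuous_subtype_val⟩
  refine ⟨G, G.continuous.continuousOn, ?_⟩
  rintro _ ⟨t, ht, rfl⟩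
  have h1 : G (γ t) = g t := congrArg (fun f => f ⟨t, ht⟩) hG
  rw [h1, hge, projIcc_of_mem hab ht]

lemma finePieces_arc {γ : ℝ → ℂ} (hγ : ContinuousOn γ (Icc 0 1)) (hi : InjOn γ (Icc 0 1)) :
    FinePieces (γ '' Icc 0 1) := by
  intro ε hε
  have hu := isCompact_Icc.uniformContinuousOn_of_continuous hγ
  obtain ⟨δ, hδ, hu⟩ := Metric.uniformContinuousOn_iff.1 hu ε hε
  obtain ⟨n, hn⟩ := exists_nat_one_div_lt hδ
  set N : ℝ := (n : ℝ) + 1 with hN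
  have hN0 : 0 < N := by positivity
  have hsub : ∀ i : Fin (n + 1), Icc ((i : ℝ) / N) ((i + 1) / N) ⊆ Icc (0 : ℝ) 1 := by
    intro i
    apply Icc_subset_Icc
    · positivity
    · rw [div_le_one hN0]
      have : (i : ℝ) ≤ n := by exact_mod_cast Nat.lt_succ_iff.1 i.2
      linarith
  have hle : ∀ i : Fin (n + 1), (i : ℝ) / N ≤ (i + 1) / N := by
    intro i
    gcongr
    linarith
  refine ⟨Fin (n + 1), inferInstance, fun i => γ '' Icc ((i : ℝ) / N) ((i + 1) / N),
    ?_, ?_, ?_, ?_, ?_⟩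
  · apply Subset.antisymm
    · rintro _ ⟨t, ht, rfl⟩
      have ht0 : 0 ≤ t * N := mul_nonneg ht.1 hN0.le
      rcases eq_or_lt_of_le ht.2 with h | h
      · subst h
        refine mem_iUnion.2 ⟨⟨n, Nat.lt_succ_self n⟩, 1, ⟨?_, ?_⟩, rfl⟩
        · rw [div_le_one hN0]
          simp [hN]
        · rw [le_div_iff₀ hN0]
          simp [hN]
      · have hlt : t * N < ((n + 1 : ℕ) : ℝ) := by
          push_cast
          rw [← hN]
          nlinarith
        refine mem_iUnion.2 ⟨⟨⌊t * N⌋₊, (Nat.floor_lt ht0).2 hlt⟩, t, ⟨?_, ?_⟩, rfl⟩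
        · rw [div_le_iff₀ hN0]
          exact Nat.floor_le ht0
        · rw [le_div_iff₀ hN0]
          exact (Nat.lt_floor_add_one _).le
    · exact iUnion_subset fun i => image_mono (hsub i)
  · intro i
    exact (isCompact_Icc.image_of_continuousOn (hγ.mono (hsub i))).isClosed
  · rintro i _ ⟨s, hs, rfl⟩ _ ⟨t, ht, rfl⟩
    refine hu s (hsub i hs) t (hsub i ht) ?_
    refine lt_of_le_of_lt (Real.dist_le_of_mem_Icc hs ht) ?_
    rw [← sub_div]
    simpa using hn
  · intro i
    exact logProp_arc (hle i) (hγ.mono (hsub i)) (hi.mono (hsub i))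
  · have key : ∀ i j : Fin (n + 1), i < j →
        (γ '' Icc ((i : ℝ) / N) ((i + 1) / N) ∩ γ '' Icc ((j : ℝ) / N) ((j + 1) / N)).Finite := by
      intro i j hij
      refine (Set.finite_singleton (γ ((j : ℝ) / N))).subset ?_
      rintro _ ⟨⟨s, hs, rfl⟩, ⟨t, ht, hst⟩⟩
      have := hi (hsub j ht) (hsub i hs) hst
      subst this
      have h1 : ((i : ℝ) + 1) / N ≤ (j : ℝ) / N := by
        gcongr
        exact_mod_cast (hij : (i : ℕ) < j)
      have : t = (j : ℝ) / N := le_antisymm (hs.2.trans h1) ht.1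
      rw [mem_singleton_iff, this]
    intro i j hij
    rcases lt_or_gt_of_ne hij with h | h
    · exact key i j h
    · rw [inter_comm]
      exact key j i h

lemma finePieces_singleton (z : ℂ) : FinePieces {z} := by
  intro ε hε
  refine ⟨Unit, inferInstance, fun _ => {z}, ?_, fun _ => isClosed_singleton, ?_, ?_, ?_⟩
  · simp
  · rintro _ x rfl y rfl
    simpa using hε
  · intro _ f _ h0
    refine ⟨fun _ => Complex.log (f z), continuousOn_const, ?_⟩
    rintro w rfl
    exact Complex.exp_log (h0 w rfl)
  · intro i j h
    exact absurd rfl h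

lemma finePieces_iUnion {ι : Type} [Fintype ι] (K : ι → Set ℂ) (hK : ∀ i, FinePieces (K i))
    (hfin : ∀ i j, i ≠ j → (K i ∩ K j).Finite) : FinePieces (⋃ i, K i) := by
  classical
  intro ε hε
  choose J hJ P hP hPc hPd hPl hPf using fun i => hK i ε hε
  have hsub : ∀ i j, P i j ⊆ K i := fun i j => by
    rw [hP i]
    exact subset_iUnion _ j
  refine ⟨Σ i, J i, inferInstance, fun x => P x.1 x.2, ?_, fun x => hPc _ _, fun x => hPd _ _,
    fun x => hPl _ _, ?_⟩
  · rw [iUnion_sigma]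
    exact iUnion_congr hP
  · rintro ⟨i, j⟩ ⟨i₂, j₂⟩ h
    by_cases hii : i = i₂
    · subst hii
      exact hPf i j j₂ fun hj => h (by rw [hj])
    · exact (hfin i i₂ hii).subset (inter_subset_inter (hsub i j) (hsub i₂ j₂))

/-- The identification of `ℂ` with `ℝ × ℝ`. -/
noncomputable def planeHomeo : ℂ ≃ₜ ℝ × ℝ := Complex.equivRealProdCLM.toHomeomorph

namespace Drawing

variable {V : Type} {G : SimpleGraph V} (D : Drawing G)

/-- The arc of an edge of the edge set. -/
noncomputable def edgeArc (e : Sym2 V) : Set (ℝ × ℝ) :=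
  {p | ∃ (u v : V) (h : G.Adj u v), e = s(u, v) ∧ p ∈ D.arc h}

lemma edgeArc_eq {u v : V} (h : G.Adj u v) : D.edgeArc s(u, v) = D.arc h := by
  ext p
  constructor
  · rintro ⟨u', v', h', he, hp⟩
    rcases Sym2.eq_iff.1 he with ⟨rfl, rfl⟩ | ⟨rfl, rfl⟩
    · exact hp
    · rw [← D.arc_symm h]
      exact hp
  · intro hp
    exact ⟨u, v, h, rfl, hp⟩

lemma edgeInt_eq {u v : V} (h : G.Adj u v) : D.edgeInt s(u, v) = D.arcInt h := by
  ext p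
  constructor
  · rintro ⟨u', v', h', he, hp⟩
    rcases Sym2.eq_iff.1 he with ⟨rfl, rfl⟩ | ⟨rfl, rfl⟩
    · exact hp
    · refine ⟨?_, ?_⟩
      · rw [← D.arc_symm h]
        exact hp.1
      · rw [Set.pair_comm]
        exact hp.2
  · intro hp
    exact ⟨u, v, h, rfl, hp⟩

lemma edgeArc_subset (e : Sym2 V) : D.edgeArc e ⊆ D.edgeInt e ∪ Set.range D.pos := by
  rintro p ⟨u, v, h, rfl, hp⟩
  rw [edgeInt_eq D h]
  by_cases h1 : p = D.pos u
  · exact Or.inr ⟨u, h1.symm⟩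
  by_cases h2 : p = D.pos v
  · exact Or.inr ⟨v, h2.symm⟩
  exact Or.inl ⟨hp, by simp [h1, h2]⟩

lemma finePieces_drawing [Fintype V] (hD : D.IsGood) :
    FinePieces (planeHomeo ⁻¹' D.drawingSet) := by
  classical
  have hfr : (Set.range D.pos).Finite := Set.finite_range _
  have heq : planeHomeo ⁻¹' D.drawingSet = ⋃ i : V ⊕ G.edgeSet,
      planeHomeo ⁻¹' (i.elim (fun v => {D.pos v}) fun e => D.edgeArc e) := by
    rw [← preimage_iUnion]
    congr 1
    ext p
    simp only [drawingSet, mem_union, mem_range, mem_iUnion]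
    constructor
    · rintro (⟨v, rfl⟩ | ⟨u, v, h, hp⟩)
      · exact ⟨Sum.inl v, rfl⟩
      · exact ⟨Sum.inr ⟨s(u, v), h⟩, u, v, h, rfl, hp⟩
    · rintro ⟨v | e, hp⟩
      · exact Or.inl ⟨v, (mem_singleton_iff.1 hp).symm⟩
      · obtain ⟨u, v, h, -, hp⟩ := hp
        exact Or.inr ⟨u, v, h, hp⟩
  rw [heq]
  have := Fintype.ofFinite (V ⊕ G.edgeSet)
  refine finePieces_iUnion _ ?_ ?_
  · rintro (v | ⟨e, he⟩)
    · have : planeHomeo ⁻¹' {D.pos v} = {planeHomeo.symm (D.pos v)} := by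
        rw [← planeHomeo.image_symm, image_singleton]
      change FinePieces (planeHomeo ⁻¹' {D.pos v})
      rw [this]
      exact finePieces_singleton _
    · induction e using Sym2.ind with
      | _ u v =>
        have h : G.Adj u v := he
        change FinePieces (planeHomeo ⁻¹' D.edgeArc s(u, v))
        rw [edgeArc_eq D h]
        obtain ⟨γ, h1, h2, h3, h4, h5⟩ := D.arc_isArc h
        rw [h5, ← planeHomeo.image_symm, ← image_comp]
        exact finePieces_arc (planeHomeo.symm.continuous.comp_continuousOn h1)
          (planeHomeo.symm.injective.comp_injOn h2)
  · rintro i j hij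
    rw [← preimage_inter]
    refine Set.Finite.preimage planeHomeo.injective.injOn ?_
    rcases i with v | e
    · exact (Set.finite_singleton _).subset inter_subset_left
    rcases j with v | f
    · exact (Set.finite_singleton _).subset inter_subset_right
    have hef : (e : Sym2 V) ≠ f := fun h => hij (by rw [Subtype.ext h])
    have hsub := hD.2.1 e f hef
    refine (hfr.union hsub.finite).subset ?_
    rintro p ⟨hp1, hp2⟩
    rcases D.edgeArc_subset _ hp1 with h1 | h1
    · rcases D.edgeArc_subset _ hp2 with h2 | h2
      · exact Or.inr ⟨h1, h2⟩
      · exact Or.inl h2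
    · exact Or.inl h1

lemma isClosed_drawingSet [Fintype V] : IsClosed D.drawingSet := by
  refine IsClosed.union (Set.finite_range _).isClosed ?_
  refine isClosed_iUnion_of_finite fun u => isClosed_iUnion_of_finite fun v =>
    isClosed_iUnion_of_finite fun h => ?_
  obtain ⟨γ, h1, h2, h3, h4, h5⟩ := D.arc_isArc h
  rw [h5]
  exact (isCompact_Icc.image_of_continuousOn h1).isClosed

lemma IsFace.isOpen {D : Drawing G} [Fintype V] {F : Set (ℝ × ℝ)} (hF : D.IsFace F) : IsOpen F := by
  obtain ⟨p, hp, rfl⟩ := hF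
  exact D.isClosed_drawingSet.isOpen_compl.connectedComponentIn

lemma IsFace.isPreconnected {D : Drawing G} {F : Set (ℝ × ℝ)} (hF : D.IsFace F) : IsPreconnected F := by
  obtain ⟨p, hp, rfl⟩ := hF
  exact isPreconnected_connectedComponentIn

lemma IsFace.subset {D : Drawing G} {F : Set (ℝ × ℝ)} (hF : D.IsFace F) : F ⊆ D.drawingSetᶜ := by
  obtain ⟨p, hp, rfl⟩ := hF
  exact connectedComponentIn_subset _ _

lemma face_access [Fintype V] (hD : D.IsGood) {F : Set (ℝ × ℝ)} (hF : D.IsFace F) {p : ℝ × ℝ}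
    (hp : p ∈ D.drawingSet) (hpF : p ∈ frontier F) :
    ∃ y ∈ F, ArcIn p y (insert p F) := by
  have hgood : GoodAt (planeHomeo ⁻¹' D.drawingSet) (planeHomeo.symm p) (planeHomeo ⁻¹' F) := by
    refine ⟨(hF.isOpen).preimage planeHomeo.continuous, ?_, ?_, ?_, 1, one_pos, ?_⟩
    · rw [← planeHomeo.image_symm]
      exact hF.isPreconnected.image _ planeHomeo.symm.continuous.continuousOn
    · rw [← planeHomeo.preimage_closure]
      simpa using hpF.1
    · exact fun z hz => hF.subset hz
    · rintro C hC hCK - ⟨w, hwC, hwF⟩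
      have h1 : IsPreconnected (planeHomeo '' C) :=
        hC.image _ planeHomeo.continuous.continuousOn
      obtain ⟨q, hq, rfl⟩ := hF
      rw [← image_subset_iff]
      rw [mem_preimage] at hwF
      rw [connectedComponentIn_eq hwF]
      refine h1.subset_connectedComponentIn ⟨w, hwC, rfl⟩ ?_
      rintro _ ⟨z, hz, rfl⟩
      exact hCK hz
  obtain ⟨γ, h1, h2, h3, h4⟩ := accessible (D.isClosed_drawingSet.preimage planeHomeo.continuous)
    (D.finePieces_drawing hD) (by simpa using hp) hgood
  refine ⟨planeHomeo (γ 1), h4 1 (by simp), planeHomeo ∘ γ,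
    planeHomeo.continuous.comp_continuousOn h1, planeHomeo.injective.comp_injOn h2, by simp [h3],
    rfl, ?_⟩
  intro t ht
  rcases eq_or_lt_of_le ht.1 with h | h
  · left
    simp [← h, h3]
  · right
    exact h4 t ⟨h, ht.2⟩

lemma face_arc [Fintype V] (hD : D.IsGood) {F : Set (ℝ × ℝ)} (hF : D.IsFace F) {p q : ℝ × ℝ}
    (hp : p ∈ D.drawingSet) (hpF : p ∈ frontier F) (hq : q ∈ D.drawingSet)
    (hqF : q ∈ frontier F) (hpq : p ≠ q) : ArcIn p q (insert p (insert q F)) := by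
  obtain ⟨x, hx, hpx⟩ := D.face_access hD hF hp hpF
  obtain ⟨y, hy, hqy⟩ := D.face_access hD hF hq hqF
  have hpy : p ≠ y := by
    rintro rfl
    exact hF.subset hy hp
  have h1 : ArcIn p y (insert p F) := by
    by_cases hxy : x = y
    · rwa [← hxy]
    · refine (hpx.trans (arcIn_of_open_connected hF.isOpen hF.isPreconnected hx hy hxy) hpy).mono ?_
      exact union_subset le_rfl (subset_insert _ _)
  refine (h1.trans hqy.symm hpq).mono (union_subset ?_ (subset_insert _ _))
  exact insert_subset_insert (subset_insert _ _)

end Drawing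

namespace Drawing

variable {V : Type} {G : SimpleGraph V}

open Classical in
/-- Add a new arc to a drawing. -/
noncomputable def addArc (D : Drawing G) (v₁ v₂ : V) (γ : ℝ → ℝ × ℝ)
    (hc : ContinuousOn γ (Icc 0 1)) (hi : InjOn γ (Icc 0 1))
    (h0 : γ 0 = D.pos v₁) (h1 : γ 1 = D.pos v₂) :
    Drawing (G ⊔ SimpleGraph.fromEdgeSet {s(v₁, v₂)}) where
  pos := D.pos
  pos_inj := D.pos_inj
  arc := fun x y _ => if hG : G.Adj x y then D.arc hG else γ '' Icc 0 1
  arc_symm := by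
    intro x y h
    by_cases hG : G.Adj x y
    · simp only [hG, hG.symm, dite_true]
      exact D.arc_symm hG
    · have : ¬ G.Adj y x := fun h => hG h.symm
      simp [hG, this]
  arc_isArc := by
    intro x y h
    by_cases hG : G.Adj x y
    · simp only [hG, dite_true]
      exact D.arc_isArc hG
    · simp only [hG, dite_false]
      have hs : s(x, y) = s(v₁, v₂) := by
        rcases (SimpleGraph.sup_adj _ _ _ _).1 h with h | h
        · exact absurd h hG
        · exact (SimpleGraph.fromEdgeSet_adj _).1 h |>.1
      rcases Sym2.eq_iff.1 hs with ⟨rfl, rfl⟩ | ⟨rfl, rfl⟩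
      · exact ⟨γ, hc, hi, h0, h1, rfl⟩
      · have hmaps : ∀ t ∈ Icc (0 : ℝ) 1, 1 - t ∈ Icc (0 : ℝ) 1 := by
          intro t ht
          exact ⟨by linarith [ht.2], by linarith [ht.1]⟩
        refine ⟨fun t => γ (1 - t), hc.comp (by fun_prop) hmaps, ?_, by simpa using h1,
          by simpa using h0, ?_⟩
        · intro s hs t ht hst
          have := hi (hmaps s hs) (hmaps t ht) hst
          linarith
        · ext q
          constructor
          · rintro ⟨t, ht, rfl⟩
            exact ⟨1 - t, hmaps t ht, by simp⟩
          · rintro ⟨t, ht, rfl⟩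
            exact ⟨1 - t, hmaps t ht, rfl⟩

lemma add_edge (D : Drawing G) (hgood : D.IsGood) (h1p : D.IsOnePlanar) {a b : V}
    (hab : G.Adj a b) (hnc : ¬∃ f, D.Cross s(a, b) f) {v₁ v₂ : V} (hadj : ¬ G.Adj v₁ v₂)
    (h1a : v₁ ≠ a) (h1b : v₁ ≠ b) (h2a : v₂ ≠ a) (h2b : v₂ ≠ b) {p : ℝ × ℝ}
    (hp : p ∈ D.arcInt hab) (γ : ℝ → ℝ × ℝ)
    (hc : ContinuousOn γ (Icc 0 1)) (hi : InjOn γ (Icc 0 1))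
    (h0 : γ 0 = D.pos v₁) (h1 : γ 1 = D.pos v₂)
    (hA : ∀ q ∈ γ '' Icc 0 1, q ∈ D.drawingSet → q = D.pos v₁ ∨ q = D.pos v₂ ∨ q = p) :
    (D.addArc v₁ v₂ γ hc hi h0 h1).IsGood ∧ (D.addArc v₁ v₂ γ hc hi h0 h1).IsOnePlanar := by
  have hold : ∀ ⦃x y : V⦄ (hG : G.Adj x y)
      (h : (G ⊔ SimpleGraph.fromEdgeSet {s(v₁, v₂)}).Adj x y),
      (D.addArc v₁ v₂ γ hc hi h0 h1).arc h = D.arc hG := by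
    intro x y hG h
    simp [addArc, hG]
  have hnew : ∀ ⦃x y : V⦄ (_ : ¬ G.Adj x y)
      (h : (G ⊔ SimpleGraph.fromEdgeSet {s(v₁, v₂)}).Adj x y),
      (D.addArc v₁ v₂ γ hc hi h0 h1).arc h = γ '' Icc 0 1 := by
    intro x y hG h
    simp [addArc, hG]
  have hpos : (D.addArc v₁ v₂ γ hc hi h0 h1).pos = D.pos := rfl
  generalize D.addArc v₁ v₂ γ hc hi h0 h1 = D' at *
  have hsym : ∀ ⦃x y : V⦄ (_ : ¬ G.Adj x y)
      (_ : (G ⊔ SimpleGraph.fromEdgeSet {s(v₁, v₂)}).Adj x y), s(x, y) = s(v₁, v₂) := by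
    intro x y hG h
    rcases (SimpleGraph.sup_adj _ _ _ _).1 h with h | h
    · exact absurd h hG
    · exact (SimpleGraph.fromEdgeSet_adj _).1 h |>.1
  have hE : ∀ e, e ≠ s(v₁, v₂) → ∀ q, q ∈ D'.edgeInt e → q ∈ D.edgeInt e := by
    rintro e he q ⟨x, y, h, rfl, hq⟩
    have hG : G.Adj x y := by
      by_contra hG
      exact he (hsym hG h)
    refine ⟨x, y, hG, rfl, ?_⟩
    rw [arcInt, hold hG h, hpos] at hq
    exact hq
  have hE0 : ∀ q ∈ D'.edgeInt s(v₁, v₂), q ∈ γ '' Icc 0 1 ∧ q ≠ D.pos v₁ ∧ q ≠ D.pos v₂ := by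
    rintro q ⟨x, y, h, he, hq⟩
    have hG : ¬ G.Adj x y := by
      intro hG
      rcases Sym2.eq_iff.1 he with ⟨rfl, rfl⟩ | ⟨rfl, rfl⟩
      · exact hadj hG
      · exact hadj hG.symm
    rw [arcInt, hnew hG h, hpos] at hq
    obtain ⟨hq1, hq2⟩ := hq
    simp only [mem_insert_iff, mem_singleton_iff, not_or] at hq2
    refine ⟨hq1, ?_⟩
    rcases Sym2.eq_iff.1 he with ⟨rfl, rfl⟩ | ⟨rfl, rfl⟩
    · exact hq2
    · exact hq2.symm
  have hkey : ∀ f, f ≠ s(v₁, v₂) → ∀ q, q ∈ D'.edgeInt s(v₁, v₂) → q ∈ D'.edgeInt f →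
      q = p ∧ f = s(a, b) := by
    intro f hf q hq0 hqf
    have hqf' := hE f hf q hqf
    obtain ⟨hqA, hq1, hq2⟩ := hE0 q hq0
    have hqd : q ∈ D.drawingSet := by
      obtain ⟨x, y, h, -, hq⟩ := hqf'
      refine Or.inr ?_
      simp only [mem_iUnion]
      exact ⟨x, y, h, hq.1⟩
    have hqp : q = p := by
      rcases hA q hqA hqd with h | h | h
      · exact absurd h hq1
      · exact absurd h hq2
      · exact h
    refine ⟨hqp, ?_⟩
    by_contra hne
    refine hnc ⟨f, fun h => hne h.symm, q, ?_, hqf'⟩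
    rw [edgeInt_eq D hab, hqp]
    exact hp
  have hps : ∀ w, D.pos w ≠ p := by
    rintro w rfl
    rcases hgood.1 w hab hp.1 with rfl | rfl
    · exact hp.2 (by simp)
    · exact hp.2 (by simp)
  refine ⟨⟨?_, ?_, ?_⟩, ?_⟩
  · intro w u v h hw
    by_cases hG : G.Adj u v
    · rw [hold hG h, hpos] at hw
      exact hgood.1 w hG hw
    · rw [hnew hG h, hpos] at hw
      have hw' : w = v₁ ∨ w = v₂ := by
        rcases hA _ hw (Or.inl ⟨w, rfl⟩) with h | h | h
        · exact Or.inl (D.pos_inj h)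
        · exact Or.inr (D.pos_inj h)
        · exact absurd h (hps w)
      rcases Sym2.eq_iff.1 (hsym hG h) with ⟨rfl, rfl⟩ | ⟨rfl, rfl⟩
      · exact hw'
      · exact hw'.symm
  · rintro e f hef q ⟨hq1, hq2⟩ r ⟨hr1, hr2⟩
    by_cases he : e = s(v₁, v₂)
    · subst he
      rw [(hkey f hef.symm q hq1 hq2).1, (hkey f hef.symm r hr1 hr2).1]
    by_cases hf : f = s(v₁, v₂)
    · subst hf
      rw [(hkey e hef q hq2 hq1).1, (hkey e hef r hr2 hr1).1]
    exact hgood.2.1 e f hef ⟨hE e he q hq1, hE f hf q hq2⟩ ⟨hE e he r hr1, hE f hf r hr2⟩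
  · have hcontra : ∀ u v w : V, s(u, v) = s(v₁, v₂) → s(u, w) = s(a, b) → False := by
      intro u v w h h'
      rcases Sym2.eq_iff.1 h with ⟨rfl, -⟩ | ⟨rfl, -⟩ <;>
        rcases Sym2.eq_iff.1 h' with ⟨h3, -⟩ | ⟨h3, -⟩ <;> contradiction
    intro u v w ha hb hvw
    rw [eq_empty_iff_forall_notMem]
    rintro q ⟨hq1, hq2⟩
    have hne : s(u, v) ≠ s(u, w) := by
      intro h
      exact hvw (Sym2.congr_right.1 h)
    rw [← edgeInt_eq D' ha] at hq1
    rw [← edgeInt_eq D' hb] at hq2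
    by_cases he : s(u, v) = s(v₁, v₂)
    · rw [he] at hq1 hne
      exact hcontra u v w he (hkey _ hne.symm q hq1 hq2).2
    by_cases hf : s(u, w) = s(v₁, v₂)
    · rw [hf] at hq2 hne
      exact hcontra u w v hf (hkey _ hne q hq2 hq1).2
    have hGv : G.Adj u v := by
      by_contra hG
      exact he (hsym hG ha)
    have hGw : G.Adj u w := by
      by_contra hG
      exact hf (hsym hG hb)
    have hq1' := hE _ he q hq1
    have hq2' := hE _ hf q hq2
    rw [edgeInt_eq D hGv] at hq1'
    rw [edgeInt_eq D hGw] at hq2'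
    have := hgood.2.2 hGv hGw hvw
    rw [eq_empty_iff_forall_notMem] at this
    exact this q ⟨hq1', hq2'⟩
  · have hside : ∀ e g, e ≠ s(v₁, v₂) → D'.Cross e s(v₁, v₂) → g ≠ s(v₁, v₂) → ¬ D'.Cross e g := by
      rintro e g he ⟨-, q, hq1, hq2⟩ hg ⟨heg, r, hr1, hr2⟩
      obtain ⟨-, rfl⟩ := hkey e he q hq2 hq1
      exact hnc ⟨g, heg, r, hE _ he r hr1, hE _ hg r hr2⟩
    intro e f hf g hg
    simp only [mem_setOf_eq] at hf hg
    by_cases he : e = s(v₁, v₂)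
    · subst he
      obtain ⟨hne, q, hq1, hq2⟩ := hf
      obtain ⟨hne2, r, hr1, hr2⟩ := hg
      rw [(hkey f hne.symm q hq1 hq2).2, (hkey g hne2.symm r hr1 hr2).2]
    by_cases hf0 : f = s(v₁, v₂)
    · by_cases hg0 : g = s(v₁, v₂)
      · rw [hf0, hg0]
      · subst hf0
        exact absurd hg (hside e g he hf hg0)
    by_cases hg0 : g = s(v₁, v₂)
    · subst hg0
      exact absurd hf (hside e f he hg hf0)
    obtain ⟨hne, q, hq1, hq2⟩ := hf
    obtain ⟨hne2, r, hr1, hr2⟩ := hg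
    exact h1p e ⟨hne, q, hE e he q hq1, hE f hf0 q hq2⟩ ⟨hne2, r, hE e he r hr1, hE g hg0 r hr2⟩

end Drawing

/-- In a maximal 1-plane graph, if two faces `F₁`, `F₂` share a non-crossing
edge and `vᵢ ∈ ∂(Fᵢ) \ ∂(F₍₃₋ᵢ₎)` for `i = 1, 2`, then `v₁` and `v₂` are adjacent. -/
theorem stmt_10 {V : Type} [Fintype V] {G : SimpleGraph V} (D : Drawing G)
    (hmax : D.IsMaximalOnePlane)
    {a b : V} (hab : G.Adj a b) (hnc : ¬∃ f, D.Cross s(a, b) f)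
    {F₁ F₂ : Set (ℝ × ℝ)} (hF₁ : D.IsFace F₁) (hF₂ : D.IsFace F₂)
    (he₁ : D.arc hab ⊆ frontier F₁) (he₂ : D.arc hab ⊆ frontier F₂)
    {v₁ v₂ : V}
    (hv₁ : v₁ ∈ D.faceVerts F₁ \ D.faceVerts F₂)
    (hv₂ : v₂ ∈ D.faceVerts F₂ \ D.faceVerts F₁) :
    G.Adj v₁ v₂ := by
  by_contra hadj
  obtain ⟨hgood, h1p, hM⟩ := hmax
  obtain ⟨δ, d1, d2, d3, d4, d5⟩ := D.arc_isArc hab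
  have hp : δ (1 / 2) ∈ D.arcInt hab := by
    have hm : (1 / 2 : ℝ) ∈ Icc (0 : ℝ) 1 := by constructor <;> norm_num
    refine ⟨by rw [d5]; exact ⟨_, hm, rfl⟩, ?_⟩
    rw [← d3, ← d4]
    rintro (h | h)
    · have := d2 hm (by simp) h
      norm_num at this
    · have := d2 hm (by simp) h
      norm_num at this
  generalize δ (1 / 2) = p at hp
  have haA : D.pos a ∈ D.arc hab := by
    rw [d5, ← d3]
    exact ⟨0, by simp, rfl⟩
  have hbA : D.pos b ∈ D.arc hab := by
    rw [d5, ← d4]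
    exact ⟨1, by simp, rfl⟩
  have h1a : v₁ ≠ a := by
    rintro rfl
    exact hv₁.2 (he₂ haA)
  have h1b : v₁ ≠ b := by
    rintro rfl
    exact hv₁.2 (he₂ hbA)
  have h2a : v₂ ≠ a := by
    rintro rfl
    exact hv₂.2 (he₁ haA)
  have h2b : v₂ ≠ b := by
    rintro rfl
    exact hv₂.2 (he₁ hbA)
  have h12 : v₁ ≠ v₂ := by
    rintro rfl
    exact hv₁.2 hv₂.1
  have hpd : p ∈ D.drawingSet := by
    refine Or.inr ?_
    simp only [mem_iUnion]
    exact ⟨a, b, hab, hp.1⟩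
  have hp1 : D.pos v₁ ≠ p := by
    rintro rfl
    exact hv₁.2 (he₂ hp.1)
  have hp2 : p ≠ D.pos v₂ := by
    rintro rfl
    exact hv₂.2 (he₁ hp.1)
  have A1 := D.face_arc hgood hF₁ (Or.inl ⟨v₁, rfl⟩) hv₁.1 hpd (he₁ hp.1) hp1
  have A2 := D.face_arc hgood hF₂ hpd (he₂ hp.1) (Or.inl ⟨v₂, rfl⟩) hv₂.1 hp2
  obtain ⟨γ, hc, hi, h0, h1, hS⟩ := A1.trans A2 (fun h => h12 (D.pos_inj h))
  refine hM v₁ v₂ h12 hadj (D.addArc v₁ v₂ γ hc hi h0 h1) rfl ?_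
    (D.add_edge hgood h1p hab hnc hadj h1a h1b h2a h2b hp γ hc hi h0 h1 ?_)
  · intro x y h
    simp [Drawing.addArc, h]
  · rintro _ ⟨t, ht, rfl⟩ hd
    rcases hS t ht with (h | h | h) | (h | h | h)
    · exact Or.inl h
    · exact Or.inr (Or.inr h)
    · exact absurd hd (hF₁.subset h)
    · exact Or.inr (Or.inr h)
    · exact Or.inr (Or.inl h)
    · exact absurd hd (hF₂.subset h)
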